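/- arXiv:0905.3827 — 2 statements merged into one kernel-verified Lean document; each statement's English description precedes it below -/
import Mathlib

section
/- Let L be a finitely related left P_k(E)-module, i.e. there is an exact sequence 0 → N → F → L → 0 of P_k(E)-modules with F free and N finitely generated. Then L contains a projective P_k(E)-submodule Q such that L/Q is finite-dimensional over k. Moreover, if L is finitely presented then Q can be chosen finitely generated. -/
namespace LPA

/-- A finite quiver: finite sets of vertices and arrows with source and target maps. -/
structure FinQuiver : Type 1 where
  V : Type
  A : Type
  [fintypeV : Fintype V]
  [decEqV : DecidableEq V]
  [fintypeA : Fintype A]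
  [decEqA : DecidableEq A]
  src : A → V
  tgt : A → V

attribute [instance] FinQuiver.fintypeV FinQuiver.decEqV FinQuiver.fintypeA FinQuiver.decEqA

/-- The inverse quiver: all arrows reversed. -/
def FinQuiver.rev (Q : FinQuiver) : FinQuiver where
  V := Q.V
  A := Q.A
  fintypeV := Q.fintypeV
  decEqV := Q.decEqV
  fintypeA := Q.fintypeA
  decEqA := Q.decEqA
  src := Q.tgt
  tgt := Q.src

/-- Generators of the path algebra: a trivial path `p v` for each vertex and an arrow `e` for
each arrow. -/
inductive PathGen (Q : FinQuiver) : Type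
  | vertex (v : Q.V) : PathGen Q
  | edge (e : Q.A) : PathGen Q

/-- Defining relations of the path algebra: the trivial paths are pairwise orthogonal
idempotents summing to `1`, and `p (src e) * e = e = e * p (tgt e)`. -/
inductive PathRel (k : Type) [CommRing k] (Q : FinQuiver) :
    FreeAlgebra k (PathGen Q) → FreeAlgebra k (PathGen Q) → Prop
  | vertex_mul_self (v : Q.V) :
      PathRel k Q (FreeAlgebra.ι k (PathGen.vertex v) * FreeAlgebra.ι k (PathGen.vertex v))
        (FreeAlgebra.ι k (PathGen.vertex v))
  | vertex_mul_ne (v w : Q.V) (h : v ≠ w) :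
      PathRel k Q (FreeAlgebra.ι k (PathGen.vertex v) * FreeAlgebra.ι k (PathGen.vertex w)) 0
  | sum_vertex :
      PathRel k Q (∑ v : Q.V, FreeAlgebra.ι k (PathGen.vertex v)) 1
  | src_mul (e : Q.A) :
      PathRel k Q
        (FreeAlgebra.ι k (PathGen.vertex (Q.src e)) * FreeAlgebra.ι k (PathGen.edge e))
        (FreeAlgebra.ι k (PathGen.edge e))
  | mul_tgt (e : Q.A) :
      PathRel k Q
        (FreeAlgebra.ι k (PathGen.edge e) * FreeAlgebra.ι k (PathGen.vertex (Q.tgt e)))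
        (FreeAlgebra.ι k (PathGen.edge e))

/-- The path algebra `P_k(Q)` of a finite quiver `Q`, presented by generators and relations. -/
def PathAlg (k : Type) [CommRing k] (Q : FinQuiver) : Type :=
  RingQuot (PathRel k Q)

variable (k : Type) [CommRing k] (Q : FinQuiver)

noncomputable instance : Ring (PathAlg k Q) :=
  inferInstanceAs (Ring (RingQuot (PathRel k Q)))

noncomputable instance : Algebra k (PathAlg k Q) :=
  inferInstanceAs (Algebra k (RingQuot (PathRel k Q)))

/-- The quotient map from the free algebra onto the path algebra. -/
noncomputable def PathAlg.mk : FreeAlgebra k (PathGen Q) →ₐ[k] PathAlg k Q :=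
  RingQuot.mkAlgHom k (PathRel k Q)

/-- The trivial path (vertex idempotent) `p v` in the path algebra. -/
noncomputable def PathAlg.p (v : Q.V) : PathAlg k Q :=
  PathAlg.mk k Q (FreeAlgebra.ι k (PathGen.vertex v))

/-- The arrow `e` in the path algebra. -/
noncomputable def PathAlg.arrow (e : Q.A) : PathAlg k Q :=
  PathAlg.mk k Q (FreeAlgebra.ι k (PathGen.edge e))

theorem PathAlg.mk_rel {x y : FreeAlgebra k (PathGen Q)} (h : PathRel k Q x y) :
    PathAlg.mk k Q x = PathAlg.mk k Q y :=
  RingQuot.mkAlgHom_rel k h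

theorem PathAlg.p_mul_self (v : Q.V) : PathAlg.p k Q v * PathAlg.p k Q v = PathAlg.p k Q v := by
  have h := PathAlg.mk_rel k Q (PathRel.vertex_mul_self v)
  simpa [map_mul, PathAlg.p] using h

theorem PathAlg.p_mul_ne (v w : Q.V) (hvw : v ≠ w) :
    PathAlg.p k Q v * PathAlg.p k Q w = 0 := by
  have h := PathAlg.mk_rel k Q (PathRel.vertex_mul_ne v w hvw)
  simpa [map_mul, PathAlg.p] using h

theorem PathAlg.sum_p : (∑ v : Q.V, PathAlg.p k Q v) = 1 := by
  have h := PathAlg.mk_rel k Q (PathRel.sum_vertex)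
  simpa [map_sum, PathAlg.p] using h

theorem PathAlg.arrow_mul_tgt (e : Q.A) :
    PathAlg.arrow k Q e * PathAlg.p k Q (Q.tgt e) = PathAlg.arrow k Q e := by
  have h := PathAlg.mk_rel k Q (PathRel.mul_tgt e)
  simpa [map_mul, PathAlg.p, PathAlg.arrow] using h

theorem PathAlg.src_mul_arrow (e : Q.A) :
    PathAlg.p k Q (Q.src e) * PathAlg.arrow k Q e = PathAlg.arrow k Q e := by
  have h := PathAlg.mk_rel k Q (PathRel.src_mul e)
  simpa [map_mul, PathAlg.p, PathAlg.arrow] using h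

/-- The set of vertices `{p v | v ∈ Q.V}` of the path algebra, as a finite set. -/
noncomputable def vertexFinset : Finset (PathAlg k Q) :=
  letI := Classical.decEq (PathAlg k Q)
  Finset.univ.image (PathAlg.p k Q)

end LPA
/-!
Every element of the path algebra has a Taylor expansion `a = ∑ v, χ_v(a) p_v + ∑ e, e ∂_e(a)`,
where `χ_v` is the coefficient of the trivial path at `v` and `∂_e` strips a leading arrow `e`.

Let `g : F → L` present `L`, and choose a finitely supported `d` such that `ker g` is generated by
vectors whose `i`-th coordinate involves only paths of length less than `d i`. Let `A ⊆ B` be the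
images in `L` of the vectors whose coordinates have length less than `d i`, respectively `d i + 1`.
Then `B` generates `L`, and if `∑ e, e • y e` lies in `B`, with `p_{t(e)} • y e = y e`, then every
`y e` lies in `A`. Lift a basis of `B / A` to homogeneous vectors `w j = p_{v_j} • w j` in `B`. The
Taylor expansion turns a relation between the `w j` modulo `A` into shorter ones, so by induction on
length there are none except those forced by `w j = p_{v_j} • w j`. Hence the `w j` generate a
projective module `⊕ⱼ P_k(E) p_{v_j}`, which together with the finite-dimensional space `A` spans
`L`. If `F` has finite rank, then `B` is finite-dimensional and there are finitely many `w j`.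
-/

namespace LPA

/-- The hypotheses force each `c j` to be idempotent, and the span to be isomorphic to the direct
sum of the left ideals `R * c j`. -/
theorem projective_span_range {R M κ : Type*} [Ring R] [AddCommGroup M] [Module R M]
    {w : κ → M} {c : κ → R} (hcw : ∀ j, c j • w j = w j)
    (hrel : ∀ a : κ →₀ R, Finsupp.linearCombination R w a = 0 → ∀ j, a j * c j = 0) :
    Module.Projective R (Submodule.span R (Set.range w)) := by
  set π := Finsupp.linearCombination R w
  let ρ := Finsupp.linearCombination R fun j => Finsupp.single j (c j)
  have hπρ (a : κ →₀ R) : π (ρ a) = π a := by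
    suffices h : π ∘ₗ ρ = π from LinearMap.congr_fun h a
    refine Finsupp.lhom_ext' fun j => LinearMap.ext_ring ?_
    simp [π, ρ, hcw]
  have hker : LinearMap.ker π ≤ LinearMap.ker ρ := fun a ha =>
    Finset.sum_eq_zero fun j _ => by simp [hrel a ha j]
  let s := (LinearMap.ker π).liftQ ρ hker ∘ₗ π.quotKerEquivRange.symm.toLinearMap
  rw [← Finsupp.range_linearCombination]
  refine .of_split s π.rangeRestrict (LinearMap.ext ?_)
  rintro ⟨_, a, rfl⟩
  have hs : s ⟨π a, a, rfl⟩ = ρ a := by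
    have hquot := congrArg ((LinearMap.ker π).liftQ ρ hker)
      (π.quotKerEquivRange_symm_apply_image a ⟨a, rfl⟩)
    exact hquot.trans ((LinearMap.ker π).liftQ_apply ρ a)
  exact Subtype.ext <| (congrArg π hs).trans (hπρ a)

theorem finite_quotient_of_sup_eq_top {k R M : Type*} [Ring k] [Ring R] [SMul k R]
    [AddCommGroup M] [Module k M] [Module R M] [IsScalarTower k R M] {A : Submodule k M}
    {P : Submodule R M} (hA : A.FG) (h : A ⊔ P.restrictScalars k = ⊤) :
    Module.Finite k (M ⧸ P) := by
  have := Module.Finite.of_fg hA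
  refine .of_surjective ((P.mkQ.restrictScalars k).domRestrict A) fun x => ?_
  obtain ⟨x, rfl⟩ := P.mkQ_surjective x
  obtain ⟨a, ha, b, hb, rfl⟩ := Submodule.mem_sup.1 (h.ge (Submodule.mem_top (x := x)))
  refine ⟨⟨a, ha⟩, ?_⟩
  simpa [Submodule.Quotient.mk_eq_zero] using hb

namespace PathAlg

section CommRing

variable {k : Type} [CommRing k] {Q : FinQuiver}

theorem completeOrthogonalIdempotents_p : CompleteOrthogonalIdempotents (p k Q) where
  idem := p_mul_self k Q
  ortho := p_mul_ne k Q
  complete := sum_p k Q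

theorem p_mul_p (v w : Q.V) : p k Q v * p k Q w = if v = w then p k Q v else 0 :=
  completeOrthogonalIdempotents_p.mul_eq v w

theorem p_mul_arrow (v : Q.V) (e : Q.A) :
    p k Q v * arrow k Q e = if v = Q.src e then arrow k Q e else 0 := by
  rw [← src_mul_arrow, ← mul_assoc, p_mul_p, ite_mul, zero_mul]
  split_ifs with h <;> simp only [h]

theorem induction_left {motive : PathAlg k Q → Prop} (one : motive 1)
    (add : ∀ a b, motive a → motive b → motive (a + b))
    (smul : ∀ (r : k) a, motive a → motive (r • a))
    (p_mul : ∀ v a, motive a → motive (p k Q v * a))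
    (arrow_mul : ∀ e a, motive a → motive (arrow k Q e * a)) (a : PathAlg k Q) : motive a := by
  suffices h : ∀ x a, motive a → motive (mk k Q x * a) by
    obtain ⟨x, rfl⟩ := RingQuot.mkAlgHom_surjective k (PathRel k Q) a
    exact mul_one (mk k Q x) ▸ h x 1 one
  intro x
  induction x using FreeAlgebra.induction with
  | grade0 r =>
    intro a ha
    rw [AlgHom.commutes, ← Algebra.smul_def]
    exact smul r a ha
  | grade1 g =>
    cases g with
    | vertex v => exact p_mul v
    | edge e => exact arrow_mul e
  | mul x y hx hy =>
    intro a ha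
    rw [map_mul, mul_assoc]
    exact hx _ (hy _ ha)
  | add x y hx hy =>
    intro a ha
    rw [map_add, add_mul]
    exact add _ _ (hx _ ha) (hy _ ha)

section Lift

variable {B : Type*} [Ring B] [Algebra k B] {π : Q.V → B} {α : Q.A → B}

/-- The universal property of the path algebra: the homomorphism determined by a complete family
of orthogonal idempotents `π` and a family `α` compatible with it. -/
noncomputable def lift (hπ : CompleteOrthogonalIdempotents π)
    (hsrc : ∀ e, π (Q.src e) * α e = α e) (htgt : ∀ e, α e * π (Q.tgt e) = α e) :
    PathAlg k Q →ₐ[k] B :=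
  RingQuot.liftAlgHom k ⟨FreeAlgebra.lift k (PathGen.rec π α), by
    intro x y h
    cases h with
    | vertex_mul_self v => simpa using (hπ.idem v).eq
    | vertex_mul_ne v w h => simpa using hπ.ortho h
    | sum_vertex => simpa using hπ.complete
    | src_mul e => simpa using hsrc e
    | mul_tgt e => simpa using htgt e⟩

variable (hπ : CompleteOrthogonalIdempotents π) (hsrc : ∀ e, π (Q.src e) * α e = α e)
  (htgt : ∀ e, α e * π (Q.tgt e) = α e)

@[simp]
theorem lift_p (v : Q.V) : lift hπ hsrc htgt (p k Q v) = π v :=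
  (RingQuot.liftAlgHom_mkAlgHom_apply ..).trans (FreeAlgebra.lift_ι_apply ..)

@[simp]
theorem lift_arrow (e : Q.A) : lift hπ hsrc htgt (arrow k Q e) = α e :=
  (RingQuot.liftAlgHom_mkAlgHom_apply ..).trans (FreeAlgebra.lift_ι_apply ..)

end Lift

theorem completeOrthogonalIdempotents_ite_eq (v : Q.V) :
    CompleteOrthogonalIdempotents fun w : Q.V => if w = v then (1 : k) else 0 where
  idem w := by split_ifs <;> simp [IsIdempotentElem]
  ortho u w h := by
    rcases eq_or_ne u v with rfl | hu
    · simp [h.symm]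
    · simp [hu]
  complete := by simp

/-- The character of the path algebra reading off the coefficient of the trivial path at `v`. -/
noncomputable def vertexCoeff (v : Q.V) : PathAlg k Q →ₐ[k] k :=
  lift (α := 0) (completeOrthogonalIdempotents_ite_eq v) (fun _ => mul_zero _)
    (fun _ => zero_mul _)

@[simp]
theorem vertexCoeff_p (v w : Q.V) : vertexCoeff v (p k Q w) = if w = v then 1 else 0 :=
  lift_p ..

@[simp]
theorem vertexCoeff_arrow (v : Q.V) (e : Q.A) : vertexCoeff v (arrow k Q e) = 0 :=
  lift_arrow ..

theorem completeOrthogonalIdempotents_triangular (v : Q.V) :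
    CompleteOrthogonalIdempotents fun w : Q.V =>
      (!![if w = v then 1 else 0, 0; 0, p k Q w] : Matrix (Fin 2) (Fin 2) (PathAlg k Q)) where
  idem w := by
    rw [IsIdempotentElem, Matrix.mul_fin_two]
    rcases eq_or_ne w v with rfl | h <;> simp [p_mul_self, *]
  ortho u w h := by
    have hentry : (if u = v then (1 : PathAlg k Q) else 0) * (if w = v then 1 else 0) = 0 := by
      rcases eq_or_ne u v with rfl | hu
      · simp [h.symm]
      · simp [hu]
    simp only [Matrix.mul_fin_two, hentry, p_mul_ne k Q u w h, mul_zero, zero_mul, add_zero]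
    exact (Matrix.eta_fin_two 0).symm
  complete := by
    ext i j
    fin_cases i <;> fin_cases j <;> simp [Matrix.sum_apply, sum_p]

/-- The triangular representation `a ↦ !![vertexCoeff (Q.src e) a, ∂ₑ a; 0, a]`, whose
off-diagonal entry is the left derivative along `e`. -/
noncomputable def triangular (e : Q.A) :
    PathAlg k Q →ₐ[k] Matrix (Fin 2) (Fin 2) (PathAlg k Q) :=
  lift (α := fun f => !![0, if f = e then p k Q (Q.tgt e) else 0; 0, arrow k Q f])
    (completeOrthogonalIdempotents_triangular (Q.src e))
    (fun f => by
      rw [Matrix.mul_fin_two]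
      rcases eq_or_ne f e with rfl | h <;> simp [src_mul_arrow, *])
    (fun f => by
      rw [Matrix.mul_fin_two]
      rcases eq_or_ne f e with rfl | h <;> simp [arrow_mul_tgt, p_mul_self, *])

@[simp]
theorem triangular_p (e : Q.A) (v : Q.V) :
    triangular e (p k Q v) = !![if v = Q.src e then 1 else 0, 0; 0, p k Q v] :=
  lift_p ..

@[simp]
theorem triangular_arrow (e f : Q.A) :
    triangular e (arrow k Q f) = !![0, if f = e then p k Q (Q.tgt e) else 0; 0, arrow k Q f] :=
  lift_arrow ..

/-- The left derivative along the arrow `e`: a path `e * q` is sent to `q`, and every path that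
does not start with `e` to `0`. -/
noncomputable def leftDeriv (e : Q.A) : PathAlg k Q →ₗ[k] PathAlg k Q where
  toFun a := triangular e a 0 1
  map_add' a b := by rw [map_add, Matrix.add_apply]
  map_smul' r a := by rw [map_smul, Matrix.smul_apply, RingHom.id_apply]

theorem triangular_apply (e : Q.A) (a : PathAlg k Q) :
    triangular e a = !![algebraMap k _ (vertexCoeff (Q.src e) a), leftDeriv e a; 0, a] := by
  suffices h : triangular e a 0 0 = algebraMap k _ (vertexCoeff (Q.src e) a) ∧
      triangular e a 1 0 = 0 ∧ triangular e a 1 1 = a by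
    rw [← h.1]
    ext i j
    fin_cases i <;> fin_cases j <;> simp [h, leftDeriv]
  induction a using induction_left with
  | one => simp
  | add a b ha hb => simp [ha, hb]
  | smul r a ha => simp [ha, Algebra.algebraMap_eq_smul_one, smul_smul]
  | p_mul v a ha => simp [Matrix.mul_apply, ha, apply_ite (algebraMap k (PathAlg k Q))]
  | arrow_mul f a ha => simp [Matrix.mul_apply, ha]

theorem leftDeriv_mul (e : Q.A) (a b : PathAlg k Q) :
    leftDeriv e (a * b) = vertexCoeff (Q.src e) a • leftDeriv e b + leftDeriv e a * b := by
  change triangular e (a * b) 0 1 = _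
  rw [map_mul, triangular_apply, triangular_apply, Matrix.mul_fin_two]
  simp [Algebra.smul_def]

@[simp]
theorem leftDeriv_one (e : Q.A) : leftDeriv e (1 : PathAlg k Q) = 0 := by
  simp [leftDeriv]

@[simp]
theorem leftDeriv_p (e : Q.A) (v : Q.V) : leftDeriv e (p k Q v) = 0 := by
  simp [leftDeriv]

@[simp]
theorem leftDeriv_arrow (e f : Q.A) :
    leftDeriv e (arrow k Q f) = if f = e then p k Q (Q.tgt e) else 0 := by
  simp [leftDeriv]

theorem leftDeriv_p_mul (e : Q.A) (v : Q.V) (a : PathAlg k Q) :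
    leftDeriv e (p k Q v * a) = if v = Q.src e then leftDeriv e a else 0 := by
  simp [leftDeriv_mul]

theorem leftDeriv_arrow_mul (e f : Q.A) (a : PathAlg k Q) :
    leftDeriv e (arrow k Q f * a) = if f = e then p k Q (Q.tgt e) * a else 0 := by
  simp [leftDeriv_mul]

theorem leftDeriv_mul_p (e : Q.A) (a : PathAlg k Q) (v : Q.V) :
    leftDeriv e (a * p k Q v) = leftDeriv e a * p k Q v := by
  simp [leftDeriv_mul]

theorem p_tgt_mul_leftDeriv (e : Q.A) (a : PathAlg k Q) :
    p k Q (Q.tgt e) * leftDeriv e a = leftDeriv e a := by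
  induction a using induction_left with
  | one => simp
  | add a b ha hb => rw [map_add, mul_add, ha, hb]
  | smul r a ha => rw [map_smul, mul_smul_comm, ha]
  | p_mul v a ha => rw [leftDeriv_p_mul, mul_ite, ha, mul_zero]
  | arrow_mul f a _ => rw [leftDeriv_arrow_mul, mul_ite, ← mul_assoc, p_mul_self, mul_zero]

theorem eq_sum_vertexCoeff_add_sum_leftDeriv (a : PathAlg k Q) :
    a = ∑ v, vertexCoeff v a • p k Q v + ∑ e, arrow k Q e * leftDeriv e a := by
  induction a using induction_left with
  | one => simp [sum_p]
  | add a b ha hb =>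
    conv_lhs => rw [ha, hb]
    simp only [map_add, add_smul, mul_add, Finset.sum_add_distrib]
    abel
  | smul r a ha =>
    conv_lhs => rw [ha]
    simp only [map_smul, smul_assoc, mul_smul_comm, smul_add, Finset.smul_sum]
  | p_mul v a ha =>
    conv_lhs => rw [ha]
    simp only [mul_add, Finset.mul_sum, mul_smul_comm, p_mul_p, ← mul_assoc, p_mul_arrow,
      leftDeriv_p_mul, map_mul, vertexCoeff_p]
    simp
  | arrow_mul f a _ => simp [leftDeriv_arrow_mul, ← mul_assoc, arrow_mul_tgt]

theorem eq_sum_leftDeriv_add_smul_p {v : Q.V} {a : PathAlg k Q} (ha : a * p k Q v = a) :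
    a = ∑ e, arrow k Q e * leftDeriv e a + vertexCoeff v a • p k Q v := by
  have hcoeff (w : Q.V) (hw : w ≠ v) : vertexCoeff w a = 0 := by
    rw [← ha, map_mul, vertexCoeff_p, if_neg hw.symm, mul_zero]
  conv_lhs => rw [eq_sum_vertexCoeff_add_sum_leftDeriv a, add_comm]
  rw [Finset.sum_eq_single_of_mem v (Finset.mem_univ v) fun w _ hw => by
    rw [hcoeff w hw, zero_smul]]

section Stable

variable {M : Type*} [AddCommGroup M] [Module (PathAlg k Q) M]

theorem sum_p_smul (x : M) : ∑ v, p k Q v • x = x := by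
  rw [← Finset.sum_smul, sum_p, one_smul]

variable [Module k M] [IsScalarTower k (PathAlg k Q) M]

theorem smul_mem_of_p_of_arrow {T : Submodule k M} (hp : ∀ v, ∀ x ∈ T, p k Q v • x ∈ T)
    (he : ∀ e, ∀ x ∈ T, arrow k Q e • x ∈ T) (a : PathAlg k Q) {x : M} (hx : x ∈ T) :
    a • x ∈ T := by
  induction a using induction_left with
  | one => rwa [one_smul]
  | add a b ha hb => rw [add_smul]; exact add_mem ha hb
  | smul r a ha => rw [smul_assoc]; exact T.smul_mem r ha
  | p_mul v a ha => rw [mul_smul]; exact hp v _ ha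
  | arrow_mul e a ha => rw [mul_smul]; exact he e _ ha

theorem span_le_of_p_of_arrow {T : Submodule k M} (hp : ∀ v, ∀ x ∈ T, p k Q v • x ∈ T)
    (he : ∀ e, ∀ x ∈ T, arrow k Q e • x ∈ T) {s : Set M} (hs : s ⊆ T) :
    (Submodule.span (PathAlg k Q) s).restrictScalars k ≤ T := by
  intro x hx
  induction hx using Submodule.span_induction with
  | mem x h => exact hs h
  | zero => exact T.zero_mem
  | add x y _ _ hx hy => exact T.add_mem hx hy
  | smul a x _ hx => exact smul_mem_of_p_of_arrow hp he a hx

variable (Q) in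
/-- The subspace `∑ e, e • W` of a left module over the path algebra. -/
noncomputable def arrowSMul (W : Submodule k M) : Submodule k M :=
  ⨆ e, W.map (Algebra.lsmul k k M (arrow k Q e))

theorem mem_arrowSMul {W : Submodule k M} {x : M} :
    x ∈ arrowSMul Q W ↔ ∃ c : Q.A → M, (∀ e, c e ∈ W) ∧ ∑ e, arrow k Q e • c e = x := by
  constructor
  · intro hx
    obtain ⟨f, hf, rfl⟩ := (Submodule.mem_iSup_iff_exists_finsupp _ _).1 hx
    choose c hc hcf using hf
    exact ⟨c, hc, by simpa [Finsupp.sum_fintype] using Finset.sum_congr rfl fun e _ => hcf e⟩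
  · rintro ⟨c, hc, rfl⟩
    exact sum_mem fun e _ => Submodule.mem_iSup_of_mem e ⟨c e, hc e, rfl⟩

theorem arrow_smul_mem_arrowSMul (e : Q.A) {W : Submodule k M} {x : M} (hx : x ∈ W) :
    arrow k Q e • x ∈ arrowSMul Q W :=
  Submodule.mem_iSup_of_mem e ⟨x, hx, rfl⟩

theorem p_smul_mem_arrowSMul (v : Q.V) {W : Submodule k M} {x : M} (hx : x ∈ arrowSMul Q W) :
    p k Q v • x ∈ arrowSMul Q W := by
  obtain ⟨c, hc, rfl⟩ := mem_arrowSMul.1 hx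
  rw [Finset.smul_sum]
  refine sum_mem fun e _ => ?_
  rw [smul_smul, p_mul_arrow]
  split_ifs
  · exact arrow_smul_mem_arrowSMul e (hc e)
  · rw [zero_smul]; exact zero_mem _

theorem fg_arrowSMul {W : Submodule k M} (hW : W.FG) : (arrowSMul Q W).FG :=
  Submodule.fg_iSup _ fun _ => hW.map _

theorem span_le_arrowSMul_sup {T : Set M} {C : Submodule k M}
    (hC : ∀ v, ∀ x ∈ C, p k Q v • x ∈ C) (hT : T ⊆ C) :
    (Submodule.span (PathAlg k Q) T).restrictScalars k ≤
      arrowSMul Q ((Submodule.span (PathAlg k Q) T).restrictScalars k) ⊔ C := by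
  set N := Submodule.span (PathAlg k Q) T
  suffices h : N.restrictScalars k ≤ (arrowSMul Q (N.restrictScalars k) ⊔ C) ⊓ N.restrictScalars k
    from h.trans inf_le_left
  apply span_le_of_p_of_arrow
  · rintro v x ⟨hx, hxN⟩
    refine ⟨?_, N.smul_mem _ hxN⟩
    obtain ⟨y, hy, z, hz, rfl⟩ := Submodule.mem_sup.1 hx
    rw [smul_add]
    exact Submodule.add_mem_sup (p_smul_mem_arrowSMul v hy) (hC v z hz)
  · rintro e x ⟨-, hxN⟩
    exact ⟨Submodule.mem_sup_left (arrow_smul_mem_arrowSMul e hxN), N.smul_mem _ hxN⟩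
  · exact fun x hx => ⟨Submodule.mem_sup_right (hT hx), Submodule.subset_span hx⟩

end Stable

section LengthLT

variable (k Q) in
/-- The span of the paths of length less than `n`. It is encoded as the space of elements killed
by every `n`-fold iterated left derivative. -/
noncomputable def lengthLT : ℕ → Submodule k (PathAlg k Q)
  | 0 => ⊥
  | n + 1 => ⨅ e, (lengthLT n).comap (leftDeriv e)

@[simp]
theorem lengthLT_zero : lengthLT k Q 0 = ⊥ := rfl

theorem mem_lengthLT_succ {n : ℕ} {a : PathAlg k Q} :
    a ∈ lengthLT k Q (n + 1) ↔ ∀ e, leftDeriv e a ∈ lengthLT k Q n := by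
  simp [lengthLT, Submodule.mem_iInf]

theorem lengthLT_mono : Monotone (lengthLT k Q) := by
  refine monotone_nat_of_le_succ fun n => ?_
  induction n with
  | zero => exact bot_le
  | succ n ih => exact fun a ha => mem_lengthLT_succ.2 fun e => ih (mem_lengthLT_succ.1 ha e)

theorem one_mem_lengthLT_succ (n : ℕ) : (1 : PathAlg k Q) ∈ lengthLT k Q (n + 1) :=
  mem_lengthLT_succ.2 fun e => by rw [leftDeriv_one]; exact zero_mem _

theorem p_mul_mem_lengthLT (v : Q.V) {n : ℕ} {a : PathAlg k Q} (ha : a ∈ lengthLT k Q n) :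
    p k Q v * a ∈ lengthLT k Q n := by
  cases n with
  | zero => rw [(Submodule.mem_bot k).1 ha, mul_zero]; exact zero_mem _
  | succ n =>
    refine mem_lengthLT_succ.2 fun e => ?_
    rw [leftDeriv_p_mul]
    split_ifs
    · exact mem_lengthLT_succ.1 ha e
    · exact zero_mem _

theorem arrow_mul_mem_lengthLT_succ (f : Q.A) {n : ℕ} {a : PathAlg k Q}
    (ha : a ∈ lengthLT k Q n) : arrow k Q f * a ∈ lengthLT k Q (n + 1) := by
  refine mem_lengthLT_succ.2 fun e => ?_
  rw [leftDeriv_arrow_mul]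
  split_ifs
  · exact p_mul_mem_lengthLT _ ha
  · exact zero_mem _

theorem exists_mem_lengthLT (a : PathAlg k Q) : ∃ n, a ∈ lengthLT k Q n := by
  induction a using induction_left with
  | one => exact ⟨1, one_mem_lengthLT_succ 0⟩
  | add a b ha hb =>
    obtain ⟨m, hm⟩ := ha
    obtain ⟨n, hn⟩ := hb
    exact ⟨max m n, add_mem (lengthLT_mono (le_max_left m n) hm)
      (lengthLT_mono (le_max_right m n) hn)⟩
  | smul r a ha => exact ha.imp fun n hn => Submodule.smul_mem _ r hn
  | p_mul v a ha => exact ha.imp fun n hn => p_mul_mem_lengthLT v hn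
  | arrow_mul e a ha =>
    obtain ⟨n, hn⟩ := ha
    exact ⟨n + 1, arrow_mul_mem_lengthLT_succ e hn⟩

theorem lengthLT_succ (n : ℕ) :
    lengthLT k Q (n + 1) =
      Submodule.span k (Set.range (p k Q)) ⊔ arrowSMul Q (lengthLT k Q n) := by
  refine le_antisymm (fun a ha => ?_) (sup_le (Submodule.span_le.2 ?_) fun x hx => ?_)
  · rw [eq_sum_vertexCoeff_add_sum_leftDeriv a]
    exact Submodule.add_mem_sup
      (sum_mem fun v _ => Submodule.smul_mem _ _ (Submodule.subset_span ⟨v, rfl⟩))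
      (mem_arrowSMul.2 ⟨_, mem_lengthLT_succ.1 ha, rfl⟩)
  · rintro _ ⟨v, rfl⟩
    rw [← mul_one (p k Q v)]
    exact p_mul_mem_lengthLT v (one_mem_lengthLT_succ n)
  · obtain ⟨c, hc, rfl⟩ := mem_arrowSMul.1 hx
    exact sum_mem fun e _ => arrow_mul_mem_lengthLT_succ e (hc e)

theorem fg_lengthLT (n : ℕ) : (lengthLT k Q n).FG := by
  induction n with
  | zero => exact Submodule.fg_bot
  | succ n ih =>
    rw [lengthLT_succ]
    exact (Submodule.fg_span (Set.finite_range _)).sup (fg_arrowSMul ih)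

end LengthLT

section LeadingPair

variable {M : Type*} [AddCommGroup M] [Module (PathAlg k Q) M] [Module k M]

variable (Q) in
/-- A pair of subspaces `A ≤ B` of a left module in which `B` contains all arrow multiples of `A`
and, conversely, the leading coefficients of a sum `∑ e, e • y e` lying in `B` belong to `A`. It
records what is needed of two consecutive steps of a filtration by length. -/
structure IsLeadingPair (A B : Submodule k M) : Prop where
  le : A ≤ B
  p_smul_mem_left (v : Q.V) {x : M} (hx : x ∈ A) : p k Q v • x ∈ A
  p_smul_mem_right (v : Q.V) {x : M} (hx : x ∈ B) : p k Q v • x ∈ B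
  arrow_smul_mem (e : Q.A) {x : M} (hx : x ∈ A) : arrow k Q e • x ∈ B
  p_tgt_smul_mem {y : Q.A → M} (hy : ∑ e, arrow k Q e • y e ∈ B) (e : Q.A) :
    p k Q (Q.tgt e) • y e ∈ A

variable [IsScalarTower k (PathAlg k Q) M] {A B : Submodule k M}

theorem smul_eq_sum_arrow_smul_add_vertexCoeff_smul {v : Q.V} {a : PathAlg k Q} {x : M}
    (ha : a * p k Q v = a) (hx : p k Q v • x = x) :
    a • x = ∑ e, arrow k Q e • leftDeriv e a • x + vertexCoeff v a • x := by
  conv_lhs => rw [eq_sum_leftDeriv_add_smul_p ha, add_smul, smul_assoc, hx, Finset.sum_smul]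
  simp only [mul_smul]

theorem IsLeadingPair.eq_zero_of_sum_smul_mem (hAB : IsLeadingPair Q A B)
    {κ : Type*} {w : κ → M} {v : κ → Q.V} (hwB : ∀ j, w j ∈ B)
    (hwv : ∀ j, p k Q (v j) • w j = w j) (hli : LinearIndependent k (A.mkQ ∘ w))
    {s : Finset κ} {n : ℕ} {a : κ → PathAlg k Q} (ha : ∀ j ∈ s, a j ∈ lengthLT k Q n)
    (hav : ∀ j ∈ s, a j * p k Q (v j) = a j) (hsum : ∑ j ∈ s, a j • w j ∈ A) :
    ∀ j ∈ s, a j = 0 := by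
  induction n generalizing a with
  | zero => exact ha
  | succ n ih =>
    let y (e : Q.A) : M := ∑ j ∈ s, leftDeriv e (a j) • w j
    have htaylor : ∑ j ∈ s, a j • w j =
        ∑ e, arrow k Q e • y e + ∑ j ∈ s, vertexCoeff (v j) (a j) • w j := by
      simp only [y, Finset.smul_sum]
      rw [Finset.sum_comm, ← Finset.sum_add_distrib]
      exact Finset.sum_congr rfl fun j hj =>
        smul_eq_sum_arrow_smul_add_vertexCoeff_smul (hav j hj) (hwv j)
    have hcoeffB : ∑ j ∈ s, vertexCoeff (v j) (a j) • w j ∈ B :=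
      sum_mem fun j _ => B.smul_mem _ (hwB j)
    have hyA (e : Q.A) : y e ∈ A := by
      have hy : p k Q (Q.tgt e) • y e = y e := by
        simp only [y, Finset.smul_sum, smul_smul, p_tgt_mul_leftDeriv]
      rw [← hy]
      exact hAB.p_tgt_smul_mem ((add_mem_cancel_right hcoeffB).1 (htaylor ▸ hAB.le hsum)) e
    have hderiv (e : Q.A) : ∀ j ∈ s, leftDeriv e (a j) = 0 :=
      ih (fun j hj => mem_lengthLT_succ.1 (ha j hj) e)
        (fun j hj => by rw [← leftDeriv_mul_p, hav j hj]) (hyA e)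
    have hy0 (e : Q.A) : y e = 0 :=
      Finset.sum_eq_zero fun j hj => by rw [hderiv e j hj, zero_smul]
    have hcoeff : ∀ j ∈ s, vertexCoeff (v j) (a j) = 0 := by
      refine linearIndependent_iff'.1 hli s _ ?_
      rw [htaylor, ← Submodule.Quotient.mk_eq_zero A, ← A.mkQ_apply] at hsum
      simpa [hy0] using hsum
    intro j hj
    rw [eq_sum_leftDeriv_add_smul_p (hav j hj), hcoeff j hj]
    simp [hderiv _ j hj]

theorem IsLeadingPair.mul_p_eq_zero_of_linearCombination_eq_zero (hAB : IsLeadingPair Q A B)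
    {κ : Type*} {w : κ → M} {v : κ → Q.V} (hwB : ∀ j, w j ∈ B)
    (hwv : ∀ j, p k Q (v j) • w j = w j) (hli : LinearIndependent k (A.mkQ ∘ w))
    {a : κ →₀ PathAlg k Q} (ha : Finsupp.linearCombination (PathAlg k Q) w a = 0) (j : κ) :
    a j * p k Q (v j) = 0 := by
  classical
  by_cases hj : j ∈ a.support
  swap
  · rw [Finsupp.notMem_support_iff.1 hj, zero_mul]
  choose n hn using fun j => exists_mem_lengthLT (a j * p k Q (v j))
  refine hAB.eq_zero_of_sum_smul_mem hwB hwv hli (s := a.support) (n := a.support.sup n)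
    (fun j hj => lengthLT_mono (Finset.le_sup hj) (hn j))
    (fun j _ => by rw [mul_assoc, p_mul_self]) ?_ j hj
  have hsum : ∑ j ∈ a.support, (a j * p k Q (v j)) • w j = 0 := by
    simpa [mul_smul, hwv, Finsupp.linearCombination_apply, Finsupp.sum] using ha
  rw [hsum]
  exact A.zero_mem

theorem IsLeadingPair.sup_restrictScalars_eq_top (hAB : IsLeadingPair Q A B)
    (hB : Submodule.span (PathAlg k Q) (B : Set M) = ⊤) {P : Submodule (PathAlg k Q) M}
    (hBP : B ≤ A ⊔ P.restrictScalars k) : A ⊔ P.restrictScalars k = ⊤ := by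
  rw [← top_le_iff, ← Submodule.restrictScalars_top k (PathAlg k Q) M, ← hB]
  refine span_le_of_p_of_arrow (fun v x hx => ?_) (fun e x hx => ?_) hBP
  all_goals
    obtain ⟨a, ha, b, hb, rfl⟩ := Submodule.mem_sup.1 hx
    rw [smul_add]
  · exact Submodule.add_mem_sup (hAB.p_smul_mem_left v ha) (P.smul_mem _ hb)
  · exact add_mem (hBP (hAB.arrow_smul_mem e ha)) (Submodule.mem_sup_right (P.smul_mem _ hb))

theorem IsLeadingPair.map {N : Type*} [AddCommGroup N] [Module (PathAlg k Q) N] [Module k N]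
    [IsScalarTower k (PathAlg k Q) N] (hAB : IsLeadingPair Q A B) {g : M →ₗ[PathAlg k Q] N}
    (hg : Function.Surjective g) {T : Set M} (hT : T ⊆ A)
    (hker : Submodule.span (PathAlg k Q) T = LinearMap.ker g) :
    IsLeadingPair Q (A.map (g.restrictScalars k)) (B.map (g.restrictScalars k)) where
  le := Submodule.map_mono hAB.le
  p_smul_mem_left v := by
    rintro _ ⟨x, hx, rfl⟩
    exact ⟨p k Q v • x, hAB.p_smul_mem_left v hx, map_smul g _ x⟩
  p_smul_mem_right v := by
    rintro _ ⟨x, hx, rfl⟩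
    exact ⟨p k Q v • x, hAB.p_smul_mem_right v hx, map_smul g _ x⟩
  arrow_smul_mem e := by
    rintro _ ⟨x, hx, rfl⟩
    exact ⟨arrow k Q e • x, hAB.arrow_smul_mem e hx, map_smul g _ x⟩
  p_tgt_smul_mem := by
    rintro y ⟨b, hb, hby⟩ e
    choose z hz using fun e => hg (y e)
    have hmem : ∑ e, arrow k Q e • z e - b ∈ LinearMap.ker g := by
      simpa [hz, sub_eq_zero] using hby.symm
    -- Modulo `A`, the kernel consists of combinations `∑ e, e • c e` with `c e` in the kernel, so
    -- the lifts `z e` can be corrected by such `c e` to make their combination lie in `B`.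
    obtain ⟨u, hu, a, ha, hua⟩ := Submodule.mem_sup.1 <|
      span_le_arrowSMul_sup (fun v _ => hAB.p_smul_mem_left v) hT (hker ▸ hmem)
    obtain ⟨c, hc, rfl⟩ := mem_arrowSMul.1 hu
    have hgc (e : Q.A) : g (c e) = 0 := hker.le (hc e)
    have hzc : ∑ e, arrow k Q e • (z e - c e) = b + a := by
      simp only [smul_sub, Finset.sum_sub_distrib]
      rw [sub_eq_iff_eq_add, add_assoc, add_comm a, hua, add_sub_cancel]
    refine ⟨_, hAB.p_tgt_smul_mem (hzc ▸ add_mem hb (hAB.le ha)) e, ?_⟩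
    simp [hz, hgc]

end LeadingPair

section CoordLengthLT

variable {ι : Type*}

variable (k Q) in
/-- The space of vectors whose `i`-th coordinate is spanned by paths of length less than `d i`,
for every `i`. -/
noncomputable def coordLengthLT (d : ι → ℕ) : Submodule k (ι →₀ PathAlg k Q) :=
  Finsupp.submodule fun i => lengthLT k Q (d i)

theorem coordLengthLT_mono : Monotone (coordLengthLT k Q : (ι → ℕ) → _) :=
  fun _ _ h _ hx i => lengthLT_mono (h i) (hx i)

theorem isLeadingPair_coordLengthLT (d : ι → ℕ) :
    IsLeadingPair Q (coordLengthLT k Q d) (coordLengthLT k Q (d + 1)) where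
  le := coordLengthLT_mono (le_add_of_nonneg_right zero_le_one)
  p_smul_mem_left v _ hx i := p_mul_mem_lengthLT v (hx i)
  p_smul_mem_right v _ hx i := p_mul_mem_lengthLT v (hx i)
  arrow_smul_mem e _ hx i := arrow_mul_mem_lengthLT_succ e (hx i)
  p_tgt_smul_mem hy e i := by
    have hderiv := mem_lengthLT_succ.1 (hy i) e
    simpa [leftDeriv_arrow_mul] using hderiv

theorem span_coordLengthLT_succ (d : ι → ℕ) :
    Submodule.span (PathAlg k Q) (coordLengthLT k Q (d + 1) : Set (ι →₀ PathAlg k Q)) = ⊤ := by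
  have hsingle (i : ι) : Finsupp.single i 1 ∈ coordLengthLT k Q (d + 1) := by
    intro j
    rcases eq_or_ne i j with rfl | h
    · rw [Finsupp.single_eq_same]
      exact one_mem_lengthLT_succ (d i)
    · rw [Finsupp.single_eq_of_ne' h]
      exact zero_mem _
  rw [← top_le_iff, ← Finsupp.basisSingleOne.span_eq, Finsupp.coe_basisSingleOne]
  exact Submodule.span_mono (Set.range_subset_iff.2 hsingle)

theorem exists_subset_coordLengthLT (T : Finset (ι →₀ PathAlg k Q)) :
    ∃ d : ι →₀ ℕ, (T : Set (ι →₀ PathAlg k Q)) ⊆ coordLengthLT k Q d := by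
  have hmem (x : ι →₀ PathAlg k Q) : ∃ d : ι →₀ ℕ, x ∈ coordLengthLT k Q d := by
    induction x using Finsupp.induction_linear with
    | zero => exact ⟨0, zero_mem _⟩
    | add x y hx hy =>
      obtain ⟨d, hd⟩ := hx
      obtain ⟨d', hd'⟩ := hy
      exact ⟨d ⊔ d', add_mem (coordLengthLT_mono (le_sup_left : d ≤ d ⊔ d') hd)
        (coordLengthLT_mono (le_sup_right : d' ≤ d ⊔ d') hd')⟩
    | single i a =>
      classical
      obtain ⟨n, hn⟩ := exists_mem_lengthLT a
      refine ⟨Finsupp.single i n, fun j => ?_⟩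
      rcases eq_or_ne i j with rfl | h
      · simpa
      · simp [h.symm]
  choose d hd using hmem
  exact ⟨T.sup d, fun x hx => coordLengthLT_mono (Finset.le_sup hx : d x ≤ T.sup d) (hd x)⟩

theorem fg_coordLengthLT {d : ι → ℕ} (hd : d.support.Finite) : (coordLengthLT k Q d).FG := by
  have hsupp : coordLengthLT k Q d =
      ⨆ i ∈ hd.toFinset, (lengthLT k Q (d i)).map (Finsupp.lsingle i) := by
    rw [coordLengthLT, Finsupp.submodule_eq_iSup]
    refine iSup_congr fun i => ?_
    rcases eq_or_ne (d i) 0 with hi | hi <;> simp [hi]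
  rw [hsupp]
  exact Submodule.fg_biSup _ _ fun i _ => (fg_lengthLT (d i)).map _

end CoordLengthLT

end CommRing

section Field

universe u

variable {k : Type} [Field k] {Q : FinQuiver} {M : Type u} [AddCommGroup M]
  [Module (PathAlg k Q) M] [Module k M]

theorem exists_homogeneous_linearIndependent_mkQ (A : Submodule k M) {B : Submodule k M}
    (hB : ∀ v, ∀ x ∈ B, p k Q v • x ∈ B) :
    ∃ (κ : Type u) (w : κ → M) (v : κ → Q.V), (∀ j, w j ∈ B) ∧
      (∀ j, p k Q (v j) • w j = w j) ∧ LinearIndependent k (A.mkQ ∘ w) ∧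
      B ≤ A ⊔ Submodule.span k (Set.range w) := by
  obtain ⟨κ, f, -, hspan, hli⟩ := exists_linearIndependent' k
    fun x : {x : M // x ∈ B ∧ ∃ v, p k Q v • x = x} => A.mkQ x
  choose v hv using fun j => (f j).2.2
  refine ⟨κ, fun j => f j, v, fun j => (f j).2.1, hv, hli, fun x hx => ?_⟩
  rw [← sum_p_smul (Q := Q) (k := k) x]
  refine sum_mem fun u _ => ?_
  rw [← Submodule.comap_map_mkQ, Submodule.mem_comap, Submodule.map_span, ← Set.range_comp]
  exact hspan.ge <| Submodule.subset_span
    ⟨⟨p k Q u • x, hB u x hx, u, by rw [smul_smul, p_mul_self]⟩, rfl⟩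

variable [IsScalarTower k (PathAlg k Q) M] {A B : Submodule k M}

theorem IsLeadingPair.exists_projective_submodule (hAB : IsLeadingPair Q A B)
    (hB : Submodule.span (PathAlg k Q) (B : Set M) = ⊤) (hA : A.FG) :
    ∃ P : Submodule (PathAlg k Q) M, Module.Projective (PathAlg k Q) P ∧
      FiniteDimensional k (M ⧸ P) ∧ (B.FG → P.FG) := by
  obtain ⟨κ, w, v, hwB, hwv, hli, hBw⟩ :=
    exists_homogeneous_linearIndependent_mkQ A fun v _ => hAB.p_smul_mem_right v
  refine ⟨Submodule.span (PathAlg k Q) (Set.range w),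
    projective_span_range hwv fun a => hAB.mul_p_eq_zero_of_linearCombination_eq_zero hwB hwv hli,
    ?_, ?_⟩
  · have hBP : B ≤ A ⊔ (Submodule.span (PathAlg k Q) (Set.range w)).restrictScalars k :=
      hBw.trans (sup_le_sup_left (Submodule.span_le_restrictScalars k _ _) A)
    exact finite_quotient_of_sup_eq_top hA (hAB.sup_restrictScalars_eq_top hB hBP)
  · rintro ⟨s, rfl⟩
    have := (hli.of_comp A.mkQ).finite_of_le_span_finite w s (Set.range_subset_iff.2 hwB)
    exact Submodule.fg_span (Set.finite_range w)

theorem exists_projective_submodule_of_fg_ker {ι : Type*}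
    {g : (ι →₀ PathAlg k Q) →ₗ[PathAlg k Q] M} (hg : Function.Surjective g)
    (hker : (LinearMap.ker g).FG) :
    ∃ P : Submodule (PathAlg k Q) M, Module.Projective (PathAlg k Q) P ∧
      FiniteDimensional k (M ⧸ P) ∧ (Finite ι → P.FG) := by
  obtain ⟨T, hT⟩ := hker
  obtain ⟨d, hd⟩ := exists_subset_coordLengthLT T
  have hspan : Submodule.span (PathAlg k Q)
      ((coordLengthLT k Q (⇑d + 1)).map (g.restrictScalars k) : Set M) = ⊤ := by
    rw [Submodule.map_coe, LinearMap.coe_restrictScalars, ← Submodule.map_span,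
      span_coordLengthLT_succ, Submodule.map_top, LinearMap.range_eq_top.2 hg]
  obtain ⟨P, hproj, hfin, hfg⟩ := ((isLeadingPair_coordLengthLT d).map hg hd hT)
    |>.exists_projective_submodule hspan ((fg_coordLengthLT d.hasFiniteSupport).map _)
  exact ⟨P, hproj, hfin, fun _ => hfg ((fg_coordLengthLT (Set.toFinite _)).map _)⟩

end Field

end PathAlg

end LPA

open LPA in
/-- Let `L` be a finitely related left `P_k(E)`-module, i.e. there is an exact
sequence `0 → N → F → L → 0` with `F` free and `N` finitely generated.  Then `L` contains a
projective `P_k(E)`-submodule `Q'` such that `L/Q'` is finite-dimensional over `k`.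
Moreover, if `L` is finitely presented then `Q'` can be chosen finitely generated. -/
theorem statement_7 (k : Type) [Field k] (Q : FinQuiver) (L : Type) [AddCommGroup L]
    [Module (PathAlg k Q) L] [Module k L] [IsScalarTower k (PathAlg k Q) L]
    (hrel : ∃ (ι : Type) (g : (ι →₀ PathAlg k Q) →ₗ[PathAlg k Q] L),
      Function.Surjective g ∧ (LinearMap.ker g).FG) :
    (∃ Q' : Submodule (PathAlg k Q) L,
        Module.Projective (PathAlg k Q) ↥Q' ∧ FiniteDimensional k (L ⧸ Q')) ∧
    (Module.FinitePresentation (PathAlg k Q) L →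
      ∃ Q' : Submodule (PathAlg k Q) L,
        Module.Projective (PathAlg k Q) ↥Q' ∧ FiniteDimensional k (L ⧸ Q') ∧ Q'.FG) := by
  constructor
  · obtain ⟨ι, g, hg, hker⟩ := hrel
    obtain ⟨P, hproj, hfin, -⟩ := PathAlg.exists_projective_submodule_of_fg_ker (k := k) hg hker
    exact ⟨P, hproj, hfin⟩
  · intro hL
    obtain ⟨s, hs, hker⟩ := hL.out
    have hg : Function.Surjective (Finsupp.linearCombination (PathAlg k Q) ((↑) : s → L)) := by
      rw [← LinearMap.range_eq_top, Finsupp.range_linearCombination, Subtype.range_coe, hs]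
    obtain ⟨P, hproj, hfin, hfg⟩ :=
      PathAlg.exists_projective_submodule_of_fg_ker (k := k) hg hker
    exact ⟨P, hproj, hfin, hfg inferInstance⟩
end

section
/- The Leavitt path algebra L_k(E) is flat as a right P_k(Ē)-module, where Ē is the inverse quiver of E and P_k(Ē) is regarded as a subalgebra of L_k(E) via the embedding sending p_i to p_i and each reversed arrow ē to the generator ē of L_k(E). -/
namespace LPA

/-- Generators of the Leavitt path algebra: vertex idempotents, arrows, and ghost arrows. -/
inductive LGen (Q : FinQuiver) : Type
  | vertex (v : Q.V) : LGen Q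
  | edge (e : Q.A) : LGen Q
  | ghost (e : Q.A) : LGen Q

/-- Defining relations of the Leavitt path algebra `L_k(E)`: (V), (E1), (E2), (CK1), (CK2),
together with `∑ p_v = 1`. -/
inductive LeavittRel (k : Type) [CommRing k] (Q : FinQuiver) :
    FreeAlgebra k (LGen Q) → FreeAlgebra k (LGen Q) → Prop
  | vertex_mul_self (v : Q.V) :
      LeavittRel k Q (FreeAlgebra.ι k (LGen.vertex v) * FreeAlgebra.ι k (LGen.vertex v))
        (FreeAlgebra.ι k (LGen.vertex v))
  | vertex_mul_ne (v w : Q.V) (h : v ≠ w) :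
      LeavittRel k Q (FreeAlgebra.ι k (LGen.vertex v) * FreeAlgebra.ι k (LGen.vertex w)) 0
  | sum_vertex :
      LeavittRel k Q (∑ v : Q.V, FreeAlgebra.ι k (LGen.vertex v)) 1
  | src_mul (e : Q.A) :
      LeavittRel k Q (FreeAlgebra.ι k (LGen.vertex (Q.src e)) * FreeAlgebra.ι k (LGen.edge e))
        (FreeAlgebra.ι k (LGen.edge e))
  | mul_tgt (e : Q.A) :
      LeavittRel k Q (FreeAlgebra.ι k (LGen.edge e) * FreeAlgebra.ι k (LGen.vertex (Q.tgt e)))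
        (FreeAlgebra.ι k (LGen.edge e))
  | tgt_mul_ghost (e : Q.A) :
      LeavittRel k Q (FreeAlgebra.ι k (LGen.vertex (Q.tgt e)) * FreeAlgebra.ι k (LGen.ghost e))
        (FreeAlgebra.ι k (LGen.ghost e))
  | ghost_mul_src (e : Q.A) :
      LeavittRel k Q (FreeAlgebra.ι k (LGen.ghost e) * FreeAlgebra.ι k (LGen.vertex (Q.src e)))
        (FreeAlgebra.ι k (LGen.ghost e))
  | ghost_mul_edge_self (e : Q.A) :
      LeavittRel k Q (FreeAlgebra.ι k (LGen.ghost e) * FreeAlgebra.ι k (LGen.edge e))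
        (FreeAlgebra.ι k (LGen.vertex (Q.tgt e)))
  | ghost_mul_edge_ne (e f : Q.A) (h : e ≠ f) :
      LeavittRel k Q (FreeAlgebra.ι k (LGen.ghost e) * FreeAlgebra.ι k (LGen.edge f)) 0
  | cuntz_krieger (v : Q.V) (h : ∃ e : Q.A, Q.src e = v) :
      LeavittRel k Q
        (∑ e ∈ Finset.univ.filter (fun e : Q.A => Q.src e = v),
          FreeAlgebra.ι k (LGen.edge e) * FreeAlgebra.ι k (LGen.ghost e))
        (FreeAlgebra.ι k (LGen.vertex v))

/-- The Leavitt path algebra `L_k(E)`. -/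
def Leavitt (k : Type) [CommRing k] (Q : FinQuiver) : Type :=
  RingQuot (LeavittRel k Q)

variable (k : Type) [CommRing k] (Q : FinQuiver)

noncomputable instance : Ring (Leavitt k Q) :=
  inferInstanceAs (Ring (RingQuot (LeavittRel k Q)))

noncomputable instance : Algebra k (Leavitt k Q) :=
  inferInstanceAs (Algebra k (RingQuot (LeavittRel k Q)))

/-- The quotient map from the free algebra onto the Leavitt path algebra. -/
noncomputable def Leavitt.mk : FreeAlgebra k (LGen Q) →ₐ[k] Leavitt k Q :=
  RingQuot.mkAlgHom k (LeavittRel k Q)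

/-- The vertex idempotent `p v` in the Leavitt path algebra. -/
noncomputable def Leavitt.p (v : Q.V) : Leavitt k Q :=
  Leavitt.mk k Q (FreeAlgebra.ι k (LGen.vertex v))

/-- The arrow `e` in the Leavitt path algebra. -/
noncomputable def Leavitt.ed (e : Q.A) : Leavitt k Q :=
  Leavitt.mk k Q (FreeAlgebra.ι k (LGen.edge e))

/-- The ghost arrow `ē` in the Leavitt path algebra. -/
noncomputable def Leavitt.gh (e : Q.A) : Leavitt k Q :=
  Leavitt.mk k Q (FreeAlgebra.ι k (LGen.ghost e))

theorem Leavitt.mk_rel {x y : FreeAlgebra k (LGen Q)} (h : LeavittRel k Q x y) :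
    Leavitt.mk k Q x = Leavitt.mk k Q y :=
  RingQuot.mkAlgHom_rel k h

theorem Leavitt.p_mul_self (v : Q.V) : Leavitt.p k Q v * Leavitt.p k Q v = Leavitt.p k Q v := by
  have h := Leavitt.mk_rel k Q (LeavittRel.vertex_mul_self v)
  simpa [map_mul, Leavitt.p] using h

theorem Leavitt.p_mul_ne (v w : Q.V) (hvw : v ≠ w) :
    Leavitt.p k Q v * Leavitt.p k Q w = 0 := by
  have h := Leavitt.mk_rel k Q (LeavittRel.vertex_mul_ne v w hvw)
  simpa [map_mul, Leavitt.p] using h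

theorem Leavitt.sum_p : (∑ v : Q.V, Leavitt.p k Q v) = 1 := by
  have h := Leavitt.mk_rel k Q (LeavittRel.sum_vertex)
  simpa [map_sum, Leavitt.p] using h

theorem Leavitt.tgt_mul_gh (e : Q.A) :
    Leavitt.p k Q (Q.tgt e) * Leavitt.gh k Q e = Leavitt.gh k Q e := by
  have h := Leavitt.mk_rel k Q (LeavittRel.tgt_mul_ghost e)
  simpa [map_mul, Leavitt.p, Leavitt.gh] using h

theorem Leavitt.gh_mul_src (e : Q.A) :
    Leavitt.gh k Q e * Leavitt.p k Q (Q.src e) = Leavitt.gh k Q e := by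
  have h := Leavitt.mk_rel k Q (LeavittRel.ghost_mul_src e)
  simpa [map_mul, Leavitt.p, Leavitt.gh] using h

/-- The canonical embedding `P_k(Ē) → L_k(E)` of the path algebra of the inverse quiver into
the Leavitt path algebra, sending `p v ↦ p v` and each reversed arrow `ē ↦ ē`. -/
noncomputable def revToLeavitt : PathAlg k Q.rev →ₐ[k] Leavitt k Q :=
  RingQuot.liftAlgHom k ⟨((FreeAlgebra.lift k fun g =>
    match g with
    | PathGen.vertex v => Leavitt.p k Q v
    | PathGen.edge e => Leavitt.gh k Q e : FreeAlgebra k (PathGen Q.rev) →ₐ[k] Leavitt k Q)), by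
      intro x y h
      induction h with
      | vertex_mul_self v =>
          simp only [map_mul, FreeAlgebra.lift_ι_apply]
          exact Leavitt.p_mul_self k Q v
      | vertex_mul_ne v w h =>
          simp only [map_mul, map_zero, FreeAlgebra.lift_ι_apply]
          exact Leavitt.p_mul_ne k Q v w h
      | sum_vertex =>
          simp only [map_sum, map_one, FreeAlgebra.lift_ι_apply]
          exact Leavitt.sum_p k Q
      | src_mul e =>
          simp only [map_mul, FreeAlgebra.lift_ι_apply]
          exact Leavitt.tgt_mul_gh k Q e
      | mul_tgt e =>
          simp only [map_mul, FreeAlgebra.lift_ι_apply]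
          exact Leavitt.gh_mul_src k Q e⟩

/-- The canonical embedding `P_k(E) → L_k(E)` of the path algebra into the Leavitt path
algebra, sending `p v ↦ p v` and each arrow `e ↦ e`. -/
noncomputable def pathToLeavitt : PathAlg k Q →ₐ[k] Leavitt k Q :=
  RingQuot.liftAlgHom k ⟨((FreeAlgebra.lift k fun g =>
    match g with
    | PathGen.vertex v => Leavitt.p k Q v
    | PathGen.edge e => Leavitt.ed k Q e : FreeAlgebra k (PathGen Q) →ₐ[k] Leavitt k Q)), by
      intro x y h
      induction h with
      | vertex_mul_self v =>
          simp only [map_mul, FreeAlgebra.lift_ι_apply]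
          exact Leavitt.p_mul_self k Q v
      | vertex_mul_ne v w h =>
          simp only [map_mul, map_zero, FreeAlgebra.lift_ι_apply]
          exact Leavitt.p_mul_ne k Q v w h
      | sum_vertex =>
          simp only [map_sum, map_one, FreeAlgebra.lift_ι_apply]
          exact Leavitt.sum_p k Q
      | src_mul e =>
          simp only [map_mul, FreeAlgebra.lift_ι_apply]
          have h := Leavitt.mk_rel k Q (LeavittRel.src_mul e)
          simpa [map_mul, Leavitt.p, Leavitt.ed] using h
      | mul_tgt e =>
          simp only [map_mul, FreeAlgebra.lift_ι_apply]
          have h := Leavitt.mk_rel k Q (LeavittRel.mul_tgt e)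
          simpa [map_mul, Leavitt.p, Leavitt.ed] using h⟩

end LPA

namespace LPA

open TensorProduct

variable (P L : Type) [Ring P] [Ring L] (φ : P →+* L)

/-- The subgroup of relations defining the balanced tensor product `L ⊗_P M` (where `L` is a
right `P`-module via `φ` and `M` a left `P`-module) as a quotient of `L ⊗_ℤ M`. -/
noncomputable def trel (M : Type) [AddCommGroup M] [Module P M] :
    Submodule L (TensorProduct ℤ L M) :=
  Submodule.span L
    {z | ∃ (l : L) (p : P) (m : M), z = (l * φ p) ⊗ₜ[ℤ] m - l ⊗ₜ[ℤ] (p • m)}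

/-- The balanced tensor product `L ⊗_P M`, a left `L`-module. -/
abbrev TensorPhi (M : Type) [AddCommGroup M] [Module P M] : Type :=
  TensorProduct ℤ L M ⧸ trel P L φ M

/-- Functoriality of `L ⊗_P -` : the map induced on balanced tensor products by a `P`-linear
map `f : M → N`. -/
noncomputable def tmap {M N : Type} [AddCommGroup M] [Module P M] [AddCommGroup N]
    [Module P N] (f : M →ₗ[P] N) : TensorPhi P L φ M →ₗ[L] TensorPhi P L φ N :=
  Submodule.mapQ _ _
    (TensorProduct.AlgebraTensorModule.map (LinearMap.id : L →ₗ[L] L)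
      f.toAddMonoidHom.toIntLinearMap)
    (by
      refine Submodule.span_le.mpr ?_
      rintro z ⟨l, p, m, rfl⟩
      simp only [SetLike.mem_coe, Submodule.mem_comap, map_sub,
        TensorProduct.AlgebraTensorModule.map_tmul, LinearMap.id_coe, id_eq,
        AddMonoidHom.coe_toIntLinearMap, LinearMap.toAddMonoidHom_coe]
      exact Submodule.subset_span ⟨l, p, f m, by rw [f.map_smul]⟩)

/-- `L` is flat as a right `P`-module (via `φ : P → L`): the functor `L ⊗_P -` preserves
injectivity. -/
def RightFlat : Prop :=
  ∀ (M N : Type) [AddCommGroup M] [Module P M] [AddCommGroup N] [Module P N],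
    ∀ f : M →ₗ[P] N, Function.Injective f → Function.Injective (tmap P L φ f)

end LPA

/-!
For a path `γ` of the quiver let `γ̄ ∈ P_k(Ē)` be its reversal. Call a property of paths eventual if
it holds for all paths which are long enough or end in a sink. By (CK2), an element `x` of a left
`L_k(E)`-module vanishes as soon as `γ̄ x = 0` eventually, and by (CK1) every `z ∈ L_k(E) ⊗ M`
satisfies `γ̄ z ∈ 1 ⊗ M` eventually. So everything comes down to the kernel of `m ↦ 1 ⊗ m`, and it
consists of the `m` with `γ̄ m = 0` eventually, a condition which every injective `P_k(Ē)`-linear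
map reflects. To see that `1 ⊗ m = 0` implies this condition, let `L_k(E)` act on the germs of
functions from paths to `M`, the generators acting by the partial maps which prepend or delete an
arrow: sending `m` to the germ of `γ ↦ γ̄ m` is `P_k(Ē)`-linear, hence extends to `L_k(E) ⊗ M`.
-/

namespace LPA

open Filter TensorProduct

section BalancedTensorProduct

variable {P L : Type} [Ring P] [Ring L] {φ : P →+* L}
  {M N X : Type} [AddCommGroup M] [Module P M] [AddCommGroup N] [Module P N]
  [AddCommGroup X] [Module L X]

variable (φ M) in
/-- The unit `m ↦ 1 ⊗ m` of the extension of scalars `L ⊗_P -`, as a `φ`-semilinear map. -/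
noncomputable def tensorUnit : M →ₛₗ[φ] TensorPhi P L φ M where
  toFun m := Submodule.Quotient.mk (1 ⊗ₜ[ℤ] m)
  map_add' a b := by rw [tmul_add, Submodule.Quotient.mk_add]
  map_smul' p m := by
    rw [← Submodule.Quotient.mk_smul, eq_comm, Submodule.Quotient.eq]
    exact Submodule.subset_span ⟨1, p, m, by rw [smul_tmul', smul_eq_mul, mul_one, one_mul]⟩

theorem span_range_tensorUnit : Submodule.span L (Set.range (tensorUnit φ M)) = ⊤ := by
  refine eq_top_iff.mpr fun z _ => ?_
  obtain ⟨t, rfl⟩ := Submodule.Quotient.mk_surjective _ z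
  induction t with
  | zero => exact Submodule.zero_mem _
  | add a b ha hb => exact Submodule.add_mem _ (ha trivial) (hb trivial)
  | tmul l m =>
    have tmul_eq : (Submodule.Quotient.mk (l ⊗ₜ[ℤ] m) : TensorPhi P L φ M) =
        l • tensorUnit φ M m := by
      change _ = l • Submodule.Quotient.mk (1 ⊗ₜ[ℤ] m)
      rw [← Submodule.Quotient.mk_smul, smul_tmul', smul_eq_mul, mul_one]
    exact tmul_eq ▸ Submodule.smul_mem _ l (Submodule.subset_span ⟨m, rfl⟩)

theorem tmap_tensorUnit (f : M →ₗ[P] N) (m : M) :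
    tmap P L φ f (tensorUnit φ M m) = tensorUnit φ N (f m) :=
  rfl

/-- The universal property of `L ⊗_P M`: a `φ`-semilinear map out of `M` extends to an `L`-linear
map out of `L ⊗_P M`. -/
noncomputable def tensorLift (h : M →ₛₗ[φ] X) : TensorPhi P L φ M →ₗ[L] X :=
  (trel P L φ M).liftQ
    (AlgebraTensorModule.lift
      { toFun := fun l => l • h.toAddMonoidHom.toIntLinearMap
        map_add' := fun a b => add_smul a b _
        map_smul' := fun a b => mul_smul a b _ })
    (by
      refine Submodule.span_le.mpr ?_
      rintro _ ⟨l, p, m, rfl⟩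
      simp [mul_smul])

theorem tensorLift_tensorUnit (h : M →ₛₗ[φ] X) (m : M) :
    tensorLift h (tensorUnit φ M m) = h m :=
  one_smul L (h m)

end BalancedTensorProduct

section Generators

variable {k : Type} [CommRing k] {Q : FinQuiver}

theorem PathAlg.induction {motive : PathAlg k Q → Prop}
    (algebraMap : ∀ c, motive (algebraMap k _ c))
    (gen : ∀ g, motive (PathAlg.mk k Q (FreeAlgebra.ι k g)))
    (mul : ∀ a b, motive a → motive b → motive (a * b))
    (add : ∀ a b, motive a → motive b → motive (a + b)) (a : PathAlg k Q) : motive a := by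
  obtain ⟨a, rfl⟩ : ∃ x, PathAlg.mk k Q x = a := RingQuot.mkAlgHom_surjective k _ a
  induction a using FreeAlgebra.induction with
  | grade0 c => simpa only [AlgHom.commutes] using algebraMap c
  | grade1 g => exact gen g
  | mul a b ha hb => simpa only [map_mul] using mul _ _ ha hb
  | add a b ha hb => simpa only [map_add] using add _ _ ha hb

theorem Leavitt.induction {motive : Leavitt k Q → Prop}
    (algebraMap : ∀ c, motive (algebraMap k _ c))
    (gen : ∀ g, motive (Leavitt.mk k Q (FreeAlgebra.ι k g)))
    (mul : ∀ a b, motive a → motive b → motive (a * b))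
    (add : ∀ a b, motive a → motive b → motive (a + b)) (a : Leavitt k Q) : motive a := by
  obtain ⟨a, rfl⟩ : ∃ x, Leavitt.mk k Q x = a := RingQuot.mkAlgHom_surjective k _ a
  induction a using FreeAlgebra.induction with
  | grade0 c => simpa only [AlgHom.commutes] using algebraMap c
  | grade1 g => exact gen g
  | mul a b ha hb => simpa only [map_mul] using mul _ _ ha hb
  | add a b ha hb => simpa only [map_add] using add _ _ ha hb

theorem Leavitt.src_mul_ed (e : Q.A) :
    Leavitt.p k Q (Q.src e) * Leavitt.ed k Q e = Leavitt.ed k Q e := by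
  simpa only [map_mul, p, ed] using mk_rel k Q (LeavittRel.src_mul e)

theorem Leavitt.gh_mul_ed_self (e : Q.A) :
    Leavitt.gh k Q e * Leavitt.ed k Q e = Leavitt.p k Q (Q.tgt e) := by
  simpa only [map_mul, p, ed, gh] using mk_rel k Q (LeavittRel.ghost_mul_edge_self e)

theorem Leavitt.gh_mul_ed_of_ne {e f : Q.A} (h : e ≠ f) :
    Leavitt.gh k Q e * Leavitt.ed k Q f = 0 := by
  simpa only [map_mul, map_zero, ed, gh] using mk_rel k Q (LeavittRel.ghost_mul_edge_ne e f h)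

theorem Leavitt.sum_ed_mul_gh {v : Q.V} (hv : ∃ e, Q.src e = v) :
    ∑ e with Q.src e = v, Leavitt.ed k Q e * Leavitt.gh k Q e = Leavitt.p k Q v := by
  simpa only [map_sum, map_mul, p, ed, gh] using mk_rel k Q (LeavittRel.cuntz_krieger v hv)

/-- The generator of the Leavitt path algebra of `Q` to which `revToLeavitt` sends a generator of
the path algebra of the inverse quiver. -/
def LGen.ofRev : PathGen Q.rev → LGen Q
  | .vertex v => .vertex v
  | .edge e => .ghost e

theorem revToLeavitt_mk_ι (g : PathGen Q.rev) :
    revToLeavitt k Q (PathAlg.mk k Q.rev (FreeAlgebra.ι k g)) =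
      Leavitt.mk k Q (FreeAlgebra.ι k (LGen.ofRev g)) := by
  refine (RingQuot.liftAlgHom_mkAlgHom_apply ..).trans ?_
  rw [FreeAlgebra.lift_ι_apply]
  cases g <;> rfl

end Generators

section Boundary

variable {Q : FinQuiver}

variable (Q) in
/-- `Q.IsBoundaryPath m v γ` says that the arrows of `γ` form a path starting at `v` which has
length at least `m` or ends in a sink. The level of the tail is truncated, so that at level `0` the
only condition left is that `γ` is a path. -/
def FinQuiver.IsBoundaryPath : ℕ → Q.V → List Q.A → Prop
  | m, v, [] => m = 0 ∨ ∀ e, Q.src e ≠ v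
  | m, v, e :: γ => Q.src e = v ∧ IsBoundaryPath (m - 1) (Q.tgt e) γ

theorem FinQuiver.IsBoundaryPath.mono {m n : ℕ} {v : Q.V} {γ : List Q.A} (hmn : m ≤ n)
    (h : Q.IsBoundaryPath n v γ) : Q.IsBoundaryPath m v γ := by
  induction γ generalizing m n v with
  | nil => exact h.imp_left fun hn => by omega
  | cons e γ ih => exact ⟨h.1, ih (Nat.sub_le_sub_right hmn 1) h.2⟩

variable (Q) in
/-- The filter of neighbourhoods of the boundary of the path space of `Q`: a property holds
eventually along it if, for some `m`, it holds for all paths which have length at least `m` or end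
in a sink. A path is encoded by its first vertex and its list of arrows. -/
def FinQuiver.boundary : Filter (Q.V × List Q.A) :=
  ⨅ m, 𝓟 {p | Q.IsBoundaryPath m p.1 p.2}

theorem hasBasis_boundary :
    Q.boundary.HasBasis (fun _ => True) fun m => {p | Q.IsBoundaryPath m p.1 p.2} :=
  hasBasis_iInf_principal <| directed_of_isDirected_le fun _ _ hmn _ hp => hp.mono hmn

theorem eventually_boundary_isBoundaryPath (m : ℕ) :
    ∀ᶠ p in Q.boundary, Q.IsBoundaryPath m p.1 p.2 :=
  hasBasis_boundary.mem_of_mem trivial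

/-- The paths on which the partial map `shift g` is defined. -/
def shiftDomain : LGen Q → Set (Q.V × List Q.A)
  | .vertex u => {p | p.1 = u}
  | .edge e => {p | p.1 = Q.src e ∧ p.2.head? = some e}
  | .ghost e => {p | p.1 = Q.tgt e}

/-- The partial map by which a generator of the Leavitt path algebra acts on paths: `p_u` is the
identity on the paths from `u`, an arrow `e` removes a leading `e`, and `ē` prepends `e` to the
paths from the target of `e`. The value is junk outside `shiftDomain g`. -/
def shift : LGen Q → Q.V × List Q.A → Q.V × List Q.A
  | .vertex _, p => p
  | .edge e, p => (Q.tgt e, p.2.tail)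
  | .ghost e, p => (Q.src e, e :: p.2)

theorem tendsto_shift (g : LGen Q) :
    Tendsto (shift g) (Q.boundary ⊓ 𝓟 (shiftDomain g)) Q.boundary := by
  refine (hasBasis_boundary.inf_principal _).tendsto_iff hasBasis_boundary |>.mpr
    fun m _ => ⟨m + 1, trivial, ?_⟩
  rintro ⟨v, γ⟩ ⟨hγ, hg⟩
  cases g with
  | vertex u => exact hγ.mono m.le_succ
  | edge e =>
    cases γ with
    | nil => simp [shiftDomain] at hg
    | cons f γ =>
      obtain ⟨-, rfl⟩ : v = Q.src e ∧ f = e := by simpa [shiftDomain] using hg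
      exact hγ.2
  | ghost e =>
    obtain rfl : v = Q.tgt e := hg
    exact ⟨rfl, hγ.mono (by omega)⟩

end Boundary

section GhostPath

variable {k : Type} [CommRing k] {Q : FinQuiver}

variable (k Q) in
/-- The element `ēₙ ⋯ ē₁ p_v` of the path algebra of the inverse quiver given by a path `e₁ ⋯ eₙ`
of `Q` starting at `v`. -/
noncomputable def ghostPath (q : Q.V × List Q.A) : PathAlg k Q.rev :=
  (q.2.reverse.map fun e : Q.A => PathAlg.arrow k Q.rev e).prod * PathAlg.p k Q.rev q.1

theorem ghostPath_mul_p_self (v : Q.V) (γ : List Q.A) :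
    ghostPath k Q (v, γ) * PathAlg.p k Q.rev v = ghostPath k Q (v, γ) := by
  rw [ghostPath, mul_assoc]
  exact congrArg _ (PathAlg.p_mul_self k Q.rev v)

theorem ghostPath_mul_p_of_ne {v w : Q.V} (hvw : v ≠ w) (γ : List Q.A) :
    ghostPath k Q (v, γ) * PathAlg.p k Q.rev w = 0 := by
  rw [ghostPath, mul_assoc]
  exact (congrArg _ (PathAlg.p_mul_ne k Q.rev v w hvw)).trans (mul_zero _)

theorem ghostPath_tgt_mul_arrow (e : Q.A) (γ : List Q.A) :
    ghostPath k Q (Q.tgt e, γ) * PathAlg.arrow k Q.rev e = ghostPath k Q (Q.src e, e :: γ) := by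
  have p_mul_arrow : PathAlg.p k Q.rev (Q.tgt e) * PathAlg.arrow k Q.rev e =
      PathAlg.arrow k Q.rev e * PathAlg.p k Q.rev (Q.src e) :=
    (PathAlg.src_mul_arrow k Q.rev e).trans (PathAlg.arrow_mul_tgt k Q.rev e).symm
  simp only [ghostPath, List.reverse_cons, List.map_append, List.prod_append, List.map_singleton,
    List.prod_singleton, mul_assoc, p_mul_arrow]

theorem ghostPath_mul_arrow_of_ne {v : Q.V} {e : Q.A} (hv : v ≠ Q.tgt e) (γ : List Q.A) :
    ghostPath k Q (v, γ) * PathAlg.arrow k Q.rev e = 0 := by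
  rw [← PathAlg.src_mul_arrow k Q.rev e, ← mul_assoc]
  exact (congrArg (· * _) (ghostPath_mul_p_of_ne hv γ)).trans (zero_mul _)

theorem ghostPath_mul_gen (q : Q.V × List Q.A) (g : PathGen Q.rev) :
    ghostPath k Q q * PathAlg.mk k Q.rev (FreeAlgebra.ι k g) =
      (shiftDomain (LGen.ofRev g)).indicator (ghostPath k Q ∘ shift (LGen.ofRev g)) q := by
  obtain ⟨v, γ⟩ := q
  cases g with
  | vertex u =>
    by_cases hv : v = u
    · rw [Set.indicator_of_mem (by exact hv), ← hv]
      exact ghostPath_mul_p_self v γ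
    · rw [Set.indicator_of_notMem (by exact hv)]
      exact ghostPath_mul_p_of_ne hv γ
  | edge e =>
    by_cases hv : v = Q.tgt e
    · rw [Set.indicator_of_mem (by exact hv), hv]
      exact ghostPath_tgt_mul_arrow (Q := Q) e γ
    · rw [Set.indicator_of_notMem (by exact hv)]
      exact ghostPath_mul_arrow_of_ne hv γ

theorem revToLeavitt_ghostPath_nil (v : Q.V) :
    revToLeavitt k Q (ghostPath k Q (v, [])) = Leavitt.p k Q v := by
  rw [ghostPath, List.reverse_nil, List.map_nil, List.prod_nil, one_mul]
  exact revToLeavitt_mk_ι (.vertex v)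

theorem revToLeavitt_ghostPath_mul_ed_of_ne {v : Q.V} {e : Q.A} (hv : v ≠ Q.src e)
    (γ : List Q.A) : revToLeavitt k Q (ghostPath k Q (v, γ)) * Leavitt.ed k Q e = 0 := by
  have map_p : revToLeavitt k Q (PathAlg.p k Q.rev v) = Leavitt.p k Q v :=
    revToLeavitt_mk_ι (.vertex v)
  rw [← ghostPath_mul_p_self, map_mul, map_p, ← Leavitt.src_mul_ed, mul_assoc,
    ← mul_assoc (Leavitt.p k Q v), Leavitt.p_mul_ne k Q v _ hv, zero_mul, mul_zero]

theorem revToLeavitt_ghostPath_cons (e : Q.A) (γ : List Q.A) :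
    revToLeavitt k Q (ghostPath k Q (Q.src e, e :: γ)) =
      revToLeavitt k Q (ghostPath k Q (Q.tgt e, γ)) * Leavitt.gh k Q e := by
  rw [← ghostPath_tgt_mul_arrow, map_mul]
  exact congrArg _ (revToLeavitt_mk_ι (.edge e))

theorem revToLeavitt_ghostPath_mul_gh_of_ne {v : Q.V} {e : Q.A} (hv : v ≠ Q.tgt e)
    (γ : List Q.A) : revToLeavitt k Q (ghostPath k Q (v, γ)) * Leavitt.gh k Q e = 0 := by
  rw [← map_zero (revToLeavitt k Q), ← ghostPath_mul_arrow_of_ne hv γ, map_mul]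
  exact congrArg _ (revToLeavitt_mk_ι (.edge e)).symm

theorem revToLeavitt_ghostPath_cons_mul_ed_self (e : Q.A) (γ : List Q.A) :
    revToLeavitt k Q (ghostPath k Q (Q.src e, e :: γ)) * Leavitt.ed k Q e =
      revToLeavitt k Q (ghostPath k Q (Q.tgt e, γ)) := by
  have map_p : revToLeavitt k Q (PathAlg.p k Q.rev (Q.tgt e)) = Leavitt.p k Q (Q.tgt e) :=
    revToLeavitt_mk_ι (.vertex (Q.tgt e))
  rw [revToLeavitt_ghostPath_cons, mul_assoc, Leavitt.gh_mul_ed_self, ← map_p, ← map_mul,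
    ghostPath_mul_p_self]

theorem revToLeavitt_ghostPath_cons_mul_ed_of_ne {e f : Q.A} (hfe : f ≠ e) (γ : List Q.A) :
    revToLeavitt k Q (ghostPath k Q (Q.src f, f :: γ)) * Leavitt.ed k Q e = 0 := by
  rw [revToLeavitt_ghostPath_cons, mul_assoc, Leavitt.gh_mul_ed_of_ne hfe, mul_zero]

theorem revToLeavitt_ghostPath_mul_ed {q : Q.V × List Q.A} (hq : Q.IsBoundaryPath 1 q.1 q.2)
    (e : Q.A) :
    revToLeavitt k Q (ghostPath k Q q) * Leavitt.ed k Q e =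
      (shiftDomain (.edge e)).indicator
        (fun q => revToLeavitt k Q (ghostPath k Q (shift (.edge e) q))) q := by
  obtain ⟨v, _ | ⟨f, γ⟩⟩ := q
  · rw [Set.indicator_of_notMem (by simp [shiftDomain])]
    exact revToLeavitt_ghostPath_mul_ed_of_ne (hq.resolve_left one_ne_zero e).symm []
  · obtain ⟨rfl, -⟩ := hq
    by_cases hfe : f = e
    · subst hfe
      rw [Set.indicator_of_mem (by simp [shiftDomain])]
      exact revToLeavitt_ghostPath_cons_mul_ed_self f γ
    · rw [Set.indicator_of_notMem (by simp [shiftDomain, hfe])]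
      exact revToLeavitt_ghostPath_cons_mul_ed_of_ne hfe γ

theorem revToLeavitt_ghostPath_mul_gen {q : Q.V × List Q.A} (hq : Q.IsBoundaryPath 1 q.1 q.2)
    (g : LGen Q) :
    revToLeavitt k Q (ghostPath k Q q) * Leavitt.mk k Q (FreeAlgebra.ι k g) =
      (shiftDomain g).indicator
        (fun q => revToLeavitt k Q (ghostPath k Q (shift g q))) q := by
  have mul_ofRev (g : PathGen Q.rev) :
      revToLeavitt k Q (ghostPath k Q q) * Leavitt.mk k Q (FreeAlgebra.ι k (LGen.ofRev g)) =
        (shiftDomain (LGen.ofRev g)).indicator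
          (fun q => revToLeavitt k Q (ghostPath k Q (shift (LGen.ofRev g) q))) q := by
    rw [← revToLeavitt_mk_ι, ← map_mul, ghostPath_mul_gen]
    exact (congrFun (Set.indicator_comp_of_zero (map_zero (revToLeavitt k Q))) q).symm
  cases g with
  | vertex u => exact mul_ofRev (.vertex u)
  | edge e => exact revToLeavitt_ghostPath_mul_ed hq e
  | ghost e => exact mul_ofRev (.edge e)

end GhostPath

section LeavittModule

variable {k : Type} [CommRing k] {Q : FinQuiver} {X : Type} [AddCommGroup X]
  [Module (Leavitt k Q) X]

theorem eq_zero_of_gh_smul_eq_zero {x : X} (hgh : ∀ e, Leavitt.gh k Q e • x = 0)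
    (hsink : ∀ v, (∀ e, Q.src e ≠ v) → Leavitt.p k Q v • x = 0) : x = 0 := by
  rw [← one_smul (Leavitt k Q) x, ← Leavitt.sum_p, Finset.sum_smul]
  refine Finset.sum_eq_zero fun v _ => ?_
  by_cases hv : ∃ e, Q.src e = v
  · rw [← Leavitt.sum_ed_mul_gh hv, Finset.sum_smul]
    exact Finset.sum_eq_zero fun e _ => by rw [mul_smul, hgh, smul_zero]
  · exact hsink v (not_exists.mp hv)

variable (k Q) in
theorem eq_zero_of_ghostPath_smul_eq_zero (m : ℕ) {x : X}
    (h : ∀ v γ, Q.IsBoundaryPath m v γ → revToLeavitt k Q (ghostPath k Q (v, γ)) • x = 0) :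
    x = 0 := by
  induction m generalizing x with
  | zero =>
    rw [← one_smul (Leavitt k Q) x, ← Leavitt.sum_p, Finset.sum_smul]
    exact Finset.sum_eq_zero fun v _ => revToLeavitt_ghostPath_nil (k := k) v ▸ h v [] (.inl rfl)
  | succ m ih =>
    refine eq_zero_of_gh_smul_eq_zero (fun e => ih fun v γ hγ => ?_)
      fun v hv => revToLeavitt_ghostPath_nil (k := k) v ▸ h v [] (.inr hv)
    rw [← mul_smul]
    by_cases hv : v = Q.tgt e
    · subst hv
      exact revToLeavitt_ghostPath_cons (k := k) e γ ▸ h (Q.src e) (e :: γ) ⟨rfl, hγ⟩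
    · rw [revToLeavitt_ghostPath_mul_gh_of_ne hv, zero_smul]

variable (k Q) in
theorem eq_zero_of_eventually_ghostPath_smul_eq_zero {x : X}
    (h : ∀ᶠ q in Q.boundary, revToLeavitt k Q (ghostPath k Q q) • x = 0) : x = 0 := by
  obtain ⟨m, -, hm⟩ := hasBasis_boundary.eventually_iff.mp h
  exact eq_zero_of_ghostPath_smul_eq_zero k Q m fun v γ hγ => hm hγ

/-- The `L_k(Q)`-submodule of all `x` such that `γ̄ x` lies in `J` for every path `γ` close enough
to the boundary, for an additive subgroup `J` stable under the path algebra of the inverse quiver.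
For `J = 1 ⊗ M` inside `L ⊗ M` it turns out to be everything. -/
noncomputable def boundarySaturation (J : AddSubgroup X)
    (hJ : ∀ a : PathAlg k Q.rev, ∀ x ∈ J, revToLeavitt k Q a • x ∈ J) :
    Submodule (Leavitt k Q) X where
  carrier := {x | ∀ᶠ q in Q.boundary, revToLeavitt k Q (ghostPath k Q q) • x ∈ J}
  zero_mem' := .of_forall fun q => by simpa only [smul_zero] using J.zero_mem
  add_mem' hx hy := by
    filter_upwards [hx, hy] with q hxq hyq
    simpa only [smul_add] using J.add_mem hxq hyq
  smul_mem' l := by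
    induction l using Leavitt.induction with
    | algebraMap c =>
      intro x hx
      filter_upwards [hx] with q hxq
      rw [← mul_smul, ← Algebra.commutes, mul_smul, ← (revToLeavitt k Q).commutes]
      exact hJ _ _ hxq
    | gen g =>
      intro x hx
      filter_upwards [eventually_boundary_isBoundaryPath 1,
        eventually_inf_principal.mp ((tendsto_shift g).eventually hx)] with q hq hxq
      rw [← mul_smul, revToLeavitt_ghostPath_mul_gen hq]
      by_cases hqg : q ∈ shiftDomain g
      · simpa only [Set.indicator_of_mem hqg] using hxq hqg
      · simpa only [Set.indicator_of_notMem hqg, zero_smul] using J.zero_mem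
    | mul a b ha hb => exact fun {x} hx => by simpa only [mul_smul] using ha (hb hx)
    | add a b ha hb =>
      intro x hx
      filter_upwards [ha hx, hb hx] with q haq hbq
      simpa only [add_smul, smul_add] using J.add_mem haq hbq

theorem eventually_ghostPath_smul_mem_range_tensorUnit {M : Type} [AddCommGroup M]
    [Module (PathAlg k Q.rev) M]
    (z : TensorPhi (PathAlg k Q.rev) (Leavitt k Q) (revToLeavitt k Q).toRingHom M) :
    ∀ᶠ q in Q.boundary, revToLeavitt k Q (ghostPath k Q q) • z ∈
      Set.range (tensorUnit (revToLeavitt k Q).toRingHom M) := by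
  let J := (tensorUnit (revToLeavitt k Q).toRingHom M).toAddMonoidHom.range
  have smul_mem_J (a : PathAlg k Q.rev) : ∀ x ∈ J, revToLeavitt k Q a • x ∈ J := by
    rintro _ ⟨m, rfl⟩
    exact ⟨a • m, map_smulₛₗ (tensorUnit (revToLeavitt k Q).toRingHom M) a m⟩
  have span_le : Submodule.span (Leavitt k Q) J ≤ boundarySaturation J smul_mem_J :=
    Submodule.span_le.mpr fun x hx => .of_forall fun q => smul_mem_J _ x hx
  exact span_le (span_range_tensorUnit.ge (Submodule.mem_top (x := z)))

end LeavittModule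

section Germ

theorem germ_coe_sum {ι α β : Type*} [AddCommMonoid β] (l : Filter α) (s : Finset ι)
    (ξ : ι → α → β) : ((∑ i ∈ s, ξ i : α → β) : Germ l β) = ∑ i ∈ s, (ξ i : Germ l β) :=
  map_sum (Germ.coeAddHom l) ξ s

/-- Pullback of germs along a partial map `φ` with domain `S`, extended by zero outside `S`. -/
noncomputable def germPullback (k N : Type*) [Semiring k] [AddCommMonoid N] [Module k N]
    {α : Type*} {l : Filter α} {S : Set α} {φ : α → α} (hφ : Tendsto φ (l ⊓ 𝓟 S) l) :
    Module.End k (Germ l N) where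
  toFun := Germ.map' (fun ξ => S.indicator (ξ ∘ φ)) fun _ _ h =>
    indicator_eventuallyEq (h.comp_tendsto hφ) .rfl
  map_add' x y := by
    induction x, y using Germ.inductionOn₂ with
    | h ξ η => exact congrArg _ (Set.indicator_add S (ξ ∘ φ) (η ∘ φ))
  map_smul' c x := by
    induction x using Germ.inductionOn with
    | h ξ => exact congrArg _ (Set.indicator_const_smul S c (ξ ∘ φ))

variable {k : Type} [CommRing k] {Q : FinQuiver} {N : Type} [AddCommGroup N] [Module k N]

variable (k N) in
/-- The action of a generator of the Leavitt path algebra on germs at the boundary. -/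
noncomputable def germGen (g : LGen Q) : Module.End k (Germ Q.boundary N) :=
  germPullback k N (tendsto_shift g)

theorem germGen_coe (g : LGen Q) (ξ : Q.V × List Q.A → N) :
    germGen k N g (ξ : Germ Q.boundary N) = ((shiftDomain g).indicator (ξ ∘ shift g) :) :=
  rfl

theorem germGen_mul_germGen_coe (g h : LGen Q) (ξ : Q.V × List Q.A → N) :
    (germGen k N g * germGen k N h) (ξ : Germ Q.boundary N) =
      ((shiftDomain g ∩ shift g ⁻¹' shiftDomain h).indicator (ξ ∘ shift h ∘ shift g) :) := by
  refine congrArg _ (funext fun q => ?_)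
  rw [← Set.indicator_indicator]
  rfl

theorem germGen_mul_eq {g h i : LGen Q}
    (hdom : shiftDomain g ∩ shift g ⁻¹' shiftDomain h = shiftDomain i)
    (hval : Set.EqOn (shift h ∘ shift g) (shift i) (shiftDomain i)) :
    germGen k N g * germGen k N h = germGen k N i := by
  refine LinearMap.ext fun z => z.inductionOn fun ξ => ?_
  rw [germGen_mul_germGen_coe, hdom]
  exact congrArg _ (Set.indicator_congr fun q hq => congrArg ξ (hval hq))

theorem germGen_mul_eq_zero {g h : LGen Q}
    (hdom : shiftDomain g ∩ shift g ⁻¹' shiftDomain h = ∅) :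
    germGen k N g * germGen k N h = 0 := by
  refine LinearMap.ext fun z => z.inductionOn fun ξ => ?_
  rw [germGen_mul_germGen_coe, hdom, Set.indicator_empty]
  rfl

theorem sum_germGen_vertex : ∑ v, germGen k N (.vertex v : LGen Q) = 1 := by
  refine LinearMap.ext fun z => z.inductionOn fun ξ => ?_
  simp only [LinearMap.sum_apply, germGen_coe, ← germ_coe_sum]
  refine congrArg _ (funext fun q => ?_)
  have indicator_vertex (v : Q.V) :
      (shiftDomain (.vertex v)).indicator (ξ ∘ shift (.vertex v)) q =
        if q.1 = v then ξ q else 0 := by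
    split_ifs with hv
    exacts [Set.indicator_of_mem (by exact hv) _, Set.indicator_of_notMem (by exact hv) _]
  simp [indicator_vertex]

theorem germGen_edge_mul_germGen_ghost_coe (e : Q.A) (ξ : Q.V × List Q.A → N) :
    (germGen k N (.edge e) * germGen k N (.ghost e)) (ξ : Germ Q.boundary N) =
      ((shiftDomain (.edge e)).indicator ξ :) := by
  refine congrArg _ (Set.indicator_congr fun ⟨v, γ⟩ hq => ?_)
  cases γ with
  | nil => simp [shiftDomain] at hq
  | cons f γ =>
    obtain ⟨rfl, rfl⟩ : v = Q.src e ∧ f = e := by simpa [shiftDomain] using hq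
    simp [shiftDomain, shift]

theorem sum_indicator_shiftDomain_edge {v : Q.V} (hv : ∃ e, Q.src e = v)
    {q : Q.V × List Q.A} (hq : Q.IsBoundaryPath 1 q.1 q.2) (ξ : Q.V × List Q.A → N) :
    ∑ e with Q.src e = v, (shiftDomain (.edge e)).indicator ξ q =
      (shiftDomain (.vertex v)).indicator ξ q := by
  obtain ⟨w, _ | ⟨f, γ⟩⟩ := q
  · obtain ⟨e, rfl⟩ := hv
    have hw : w ≠ Q.src e := (hq.resolve_left one_ne_zero e).symm
    simp [Set.indicator, shiftDomain, hw]
  · obtain ⟨rfl, -⟩ := hq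
    have mem_iff (e : Q.A) : (Q.src f, f :: γ) ∈ shiftDomain (.edge e) ↔ f = e := by
      simp +contextual [shiftDomain]
    have indicator_edge (e : Q.A) : (shiftDomain (.edge e)).indicator ξ (Q.src f, f :: γ) =
        if f = e then ξ (Q.src f, f :: γ) else 0 := by
      split_ifs with hfe
      exacts [Set.indicator_of_mem ((mem_iff e).mpr hfe) ξ,
        Set.indicator_of_notMem (mt (mem_iff e).mp hfe) ξ]
    simp only [indicator_edge, Finset.sum_ite_eq, Finset.mem_filter_univ]
    split_ifs with hfv
    exacts [(Set.indicator_of_mem (by exact hfv) ξ).symm,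
      (Set.indicator_of_notMem (by exact hfv) ξ).symm]

-- As an identity of operators on functions this fails at the trivial path at `v`: hence the germs.
theorem sum_germGen_edge_mul_germGen_ghost {v : Q.V} (hv : ∃ e, Q.src e = v) :
    ∑ e with Q.src e = v, germGen k N (.edge e) * germGen k N (.ghost e) =
      germGen k N (.vertex v) := by
  refine LinearMap.ext fun z => z.inductionOn fun ξ => ?_
  simp only [LinearMap.sum_apply, germGen_edge_mul_germGen_ghost_coe, ← germ_coe_sum]
  refine Germ.coe_eq.mpr ?_
  filter_upwards [eventually_boundary_isBoundaryPath 1] with q hq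
  rw [Finset.sum_apply]
  exact sum_indicator_shiftDomain_edge hv hq ξ

theorem lift_germGen_eq {x y : FreeAlgebra k (LGen Q)} (h : LeavittRel k Q x y) :
    FreeAlgebra.lift k (germGen k N) x = FreeAlgebra.lift k (germGen k N) y := by
  induction h with simp only [map_mul, map_sum, map_one, map_zero, FreeAlgebra.lift_ι_apply]
  | sum_vertex => exact sum_germGen_vertex
  | cuntz_krieger v hv => exact sum_germGen_edge_mul_germGen_ghost hv
  | vertex_mul_ne | ghost_mul_edge_ne =>
    exact germGen_mul_eq_zero (by ext; grind [shiftDomain, shift])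
  | _ =>
    exact germGen_mul_eq (by ext; grind [shiftDomain, shift])
      (by intro q hq; grind [shiftDomain, shift])

variable (k Q N) in
/-- The action of the Leavitt path algebra on germs at the boundary. -/
noncomputable def germRep : Leavitt k Q →ₐ[k] Module.End k (Germ Q.boundary N) :=
  RingQuot.liftAlgHom k ⟨FreeAlgebra.lift k (germGen k N), fun _ _ => lift_germGen_eq⟩

theorem germRep_mk_ι (g : LGen Q) :
    germRep k Q N (Leavitt.mk k Q (FreeAlgebra.ι k g)) = germGen k N g :=
  (RingQuot.liftAlgHom_mkAlgHom_apply ..).trans (FreeAlgebra.lift_ι_apply ..)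

variable (k Q N) in
/-- The module structure on germs at the boundary given by `germRep`. -/
noncomputable abbrev germModule : Module (Leavitt k Q) (Germ Q.boundary N) :=
  Module.compHom _ (germRep k Q N).toRingHom

attribute [local instance] germModule

variable [Module (PathAlg k Q.rev) N] [IsScalarTower k (PathAlg k Q.rev) N]

theorem germRep_revToLeavitt_ghostPath_smul (a : PathAlg k Q.rev) (n : N) :
    germRep k Q N (revToLeavitt k Q a)
        ((fun q => ghostPath k Q q • n : _ → N) : Germ Q.boundary N) =
      ((fun q => ghostPath k Q q • a • n : _ → N) : Germ Q.boundary N) := by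
  induction a using PathAlg.induction generalizing n with
  | algebraMap c =>
    rw [AlgHom.commutes, AlgHom.commutes, Module.algebraMap_end_apply]
    refine congrArg _ (funext fun q => ?_)
    change c • ghostPath k Q q • n = _
    rw [← mul_smul, ← Algebra.commutes, mul_smul, algebraMap_smul]
  | gen g =>
    rw [revToLeavitt_mk_ι, germRep_mk_ι, germGen_coe]
    refine congrArg _ (funext fun q => ?_)
    rw [← mul_smul, ghostPath_mul_gen]
    exact congrFun (Set.indicator_comp_of_zero (g := (· • n)) (zero_smul _ n)) q
  | mul a b ha hb => simp only [map_mul, Module.End.mul_apply, hb, ha, mul_smul]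
  | add a b ha hb =>
    rw [map_add, map_add, LinearMap.add_apply, ha, hb]
    refine congrArg _ (funext fun q => ?_)
    simp only [add_smul, smul_add]

variable (k Q N) in
/-- The germ of `γ ↦ γ̄ n` at the boundary. -/
noncomputable def ghostGerm : N →ₛₗ[(revToLeavitt k Q).toRingHom] Germ Q.boundary N where
  toFun n := ((fun q => ghostPath k Q q • n : _ → N) : Germ Q.boundary N)
  map_add' a b := congrArg _ (funext fun _ => smul_add _ a b)
  map_smul' a n := (germRep_revToLeavitt_ghostPath_smul a n).symm

theorem eventually_ghostPath_smul_eq_zero {n : N}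
    (hn : tensorUnit (revToLeavitt k Q).toRingHom N n = 0) :
    ∀ᶠ q in Q.boundary, ghostPath k Q q • n = 0 := by
  refine Germ.coe_eq.mp (?_ : ghostGerm k Q N n = 0)
  rw [← tensorLift_tensorUnit (ghostGerm k Q N), hn, map_zero]

end Germ

section TensorUnitKernel

variable {k : Type} [CommRing k] {Q : FinQuiver}

theorem tensorUnit_eq_zero_iff {N : Type} [AddCommGroup N] [Module (PathAlg k Q.rev) N] {n : N} :
    tensorUnit (revToLeavitt k Q).toRingHom N n = 0 ↔
      ∀ᶠ q in Q.boundary, ghostPath k Q q • n = 0 := by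
  constructor
  · let : Module k N := Module.compHom N (algebraMap k (PathAlg k Q.rev))
    have : IsScalarTower k (PathAlg k Q.rev) N := .of_algebraMap_smul fun _ _ => rfl
    exact eventually_ghostPath_smul_eq_zero
  · intro h
    refine eq_zero_of_eventually_ghostPath_smul_eq_zero k Q (h.mono fun q hq => ?_)
    rw [← AlgHom.coe_toRingHom]
    exact (map_smulₛₗ _ _ n).symm.trans (by rw [hq, map_zero])

end TensorUnitKernel

end LPA

open LPA in
theorem statement_8_general (k : Type) [CommRing k] (Q : FinQuiver) :
    RightFlat (PathAlg k Q.rev) (Leavitt k Q) (revToLeavitt k Q).toRingHom := by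
  intro M N _ _ _ _ f hf
  refine (injective_iff_map_eq_zero _).mpr fun z hz => ?_
  refine eq_zero_of_eventually_ghostPath_smul_eq_zero k Q ?_
  filter_upwards [eventually_ghostPath_smul_mem_range_tensorUnit z] with q ⟨m, hm⟩
  have hfm : tensorUnit (revToLeavitt k Q).toRingHom N (f m) = 0 := by
    rw [← tmap_tensorUnit, hm, map_smul, hz, smul_zero]
  rw [← hm, tensorUnit_eq_zero_iff]
  refine (tensorUnit_eq_zero_iff.mp hfm).mono fun r hr => ?_
  rwa [← map_smul, map_eq_zero_iff f hf] at hr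

open LPA in
/-- The Leavitt path algebra `L_k(E)` is flat as a right `P_k(Ē)`-module, where
`Ē` is the inverse quiver of `E` and `P_k(Ē)` is embedded in `L_k(E)` by `p_i ↦ p_i`,
`ē ↦ ē`. -/
theorem statement_8 (k : Type) [Field k] (Q : FinQuiver) :
    RightFlat (PathAlg k Q.rev) (Leavitt k Q) (revToLeavitt k Q).toRingHom := by
  exact statement_8_general k Q
end
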